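/- arXiv:2110.01838 — 7 statements merged into one kernel-verified Lean document; each statement's English description precedes it below -/
import Mathlib

section
/- Let n ≥ 3 and let S be a total dominating set of the flower snark J_n. Then there is no index i such that the copies J^i, J^{i+1}, J^{i+2} have weights 1, 1, 1 in S; there is no index i such that J^i, J^{i+1}, J^{i+2}, J^{i+3} have weights 1, 1, 2, 1 (or, read in reverse, 1, 2, 1, 1) in S; and there is no index i such that J^i, …, J^{i+4} have weights 1, 2, 1, 2, 1 in S (all indices mod n). -/
/-- Vertices of the flower snark `J_n`: a copy index `i : Fin n` together with
one of the four vertices of the copy: `0 = a`, `1 = b`, `2 = c`, `3 = d`. -/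
abbrev FV (n : ℕ) := Fin n × Fin 4

/-- The flower snark `J_n`: in each copy, `a^i` is adjacent to `b^i, c^i, d^i`;
the `b` vertices form an `n`-cycle; the `c` and `d` vertices form a `2n`-cycle
via the paths `c^i c^{i+1}`, `d^i d^{i+1}` (for `1 ≤ i ≤ n-1`) together with the
twist edges `c^n d^1` and `d^n c^1`. -/
def flowerSnark (n : ℕ) : SimpleGraph (FV n) :=
  SimpleGraph.fromRel (fun v w =>
    (v.1 = w.1 ∧ v.2 = 0 ∧ w.2 ≠ 0) ∨
    (((v.1 : ℕ) + 1) % n = (w.1 : ℕ) ∧ v.2 = 1 ∧ w.2 = 1) ∨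
    ((v.1 : ℕ) + 1 = (w.1 : ℕ) ∧ v.2 = 2 ∧ w.2 = 2) ∨
    ((v.1 : ℕ) + 1 = (w.1 : ℕ) ∧ v.2 = 3 ∧ w.2 = 3) ∨
    ((v.1 : ℕ) = n - 1 ∧ (w.1 : ℕ) = 0 ∧ v.2 = 2 ∧ w.2 = 3) ∨
    ((v.1 : ℕ) = n - 1 ∧ (w.1 : ℕ) = 0 ∧ v.2 = 3 ∧ w.2 = 2))

/-- `S` is a dominating set of `J_n`. -/
def Dominating (n : ℕ) (S : Set (FV n)) : Prop :=
  ∀ v ∉ S, ∃ w ∈ S, (flowerSnark n).Adj v w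

/-- `S` is a minimal dominating set of `J_n`. -/
def MinimalDominating (n : ℕ) (S : Set (FV n)) : Prop :=
  Dominating n S ∧ ∀ T : Set (FV n), T ⊂ S → ¬ Dominating n T

/-- `S` is an independent set of `J_n`. -/
def IndependentSet (n : ℕ) (S : Set (FV n)) : Prop :=
  ∀ v ∈ S, ∀ w ∈ S, ¬ (flowerSnark n).Adj v w

/-- `S` is a 2-dominating set of `J_n`: every vertex outside `S` has at least
two neighbours in `S`. -/
def TwoDominating (n : ℕ) (S : Set (FV n)) : Prop :=
  ∀ v ∉ S, ∃ w₁ ∈ S, ∃ w₂ ∈ S, w₁ ≠ w₂ ∧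
    (flowerSnark n).Adj v w₁ ∧ (flowerSnark n).Adj v w₂

/-- `S` is a total dominating set of `J_n`. -/
def TotalDominating (n : ℕ) (S : Set (FV n)) : Prop :=
  ∀ v : FV n, ∃ w ∈ S, (flowerSnark n).Adj v w

/-- `S` is a connected dominating set of `J_n`. -/
def ConnectedDominating (n : ℕ) (S : Set (FV n)) : Prop :=
  Dominating n S ∧ ((flowerSnark n).induce S).Connected

/-- `S` is a secure dominating set of `J_n`. -/
def SecureDominating (n : ℕ) (S : Set (FV n)) : Prop :=
  Dominating n S ∧ ∀ v ∉ S, ∃ w ∈ S,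
    (flowerSnark n).Adj v w ∧ Dominating n (insert v (S \ {w}))

/-- `v` is undefended with respect to `f`: neither `v` nor any of its
neighbours carries a guard. -/
def Undefended (n : ℕ) (f : FV n → ℕ) (v : FV n) : Prop :=
  f v = 0 ∧ ∀ w, (flowerSnark n).Adj v w → f w = 0

/-- `f` is a weak Roman dominating function on `J_n`: `f` takes values in
`{0,1,2}`, has no undefended vertex, and every vertex `v` with `f v = 0` has a
neighbour `w` with `f w ≥ 1` such that moving one guard from `w` to `v` leaves
no undefended vertex. -/
def WeakRomanDominating (n : ℕ) (f : FV n → ℕ) : Prop :=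
  (∀ v, f v ≤ 2) ∧ (∀ v, ¬ Undefended n f v) ∧
  ∀ v, f v = 0 → ∃ w, (flowerSnark n).Adj v w ∧ 1 ≤ f w ∧
    ∀ u, ¬ Undefended n
      (fun x => if x = v then 1 else if x = w then f w - 1 else f x) u

/-- The domination number of `J_n`. -/
noncomputable def dominationNumber (n : ℕ) : ℕ :=
  sInf {k | ∃ S : Set (FV n), Dominating n S ∧ S.ncard = k}

/-- The independent domination number of `J_n`. -/
noncomputable def indepDominationNumber (n : ℕ) : ℕ :=
  sInf {k | ∃ S : Set (FV n), Dominating n S ∧ IndependentSet n S ∧ S.ncard = k}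

/-- The upper domination number of `J_n`: the maximum cardinality of a minimal
dominating set. -/
noncomputable def upperDominationNumber (n : ℕ) : ℕ :=
  sSup {k | ∃ S : Set (FV n), MinimalDominating n S ∧ S.ncard = k}

/-- The 2-domination number of `J_n`. -/
noncomputable def twoDominationNumber (n : ℕ) : ℕ :=
  sInf {k | ∃ S : Set (FV n), TwoDominating n S ∧ S.ncard = k}

/-- The total domination number of `J_n`. -/
noncomputable def totalDominationNumber (n : ℕ) : ℕ :=
  sInf {k | ∃ S : Set (FV n), TotalDominating n S ∧ S.ncard = k}

/-- The connected domination number of `J_n`. -/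
noncomputable def connectedDominationNumber (n : ℕ) : ℕ :=
  sInf {k | ∃ S : Set (FV n), ConnectedDominating n S ∧ S.ncard = k}

/-- The secure domination number of `J_n`. -/
noncomputable def secureDominationNumber (n : ℕ) : ℕ :=
  sInf {k | ∃ S : Set (FV n), SecureDominating n S ∧ S.ncard = k}

/-- The weak Roman domination number of `J_n`. -/
noncomputable def weakRomanDominationNumber (n : ℕ) : ℕ :=
  sInf {k | ∃ f : FV n → ℕ, WeakRomanDominating n f ∧ ∑ v, f v = k}

/-- The weight of the copy `J^(m mod n)` in a vertex set `S`, i.e. the number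
of vertices of `S` among `a, b, c, d` of that copy. -/
noncomputable def copyWeight {n : ℕ} (S : Set (FV n)) (m : ℕ) : ℕ :=
  (S ∩ {v : FV n | (v.1 : ℕ) = m % n}).ncard

/-- The weight of the copy `J^(m mod n)` in a function `f`, i.e.
`f a + f b + f c + f d` over that copy. -/
def fCopyWeight {n : ℕ} (f : FV n → ℕ) (m : ℕ) : ℕ :=
  ∑ v ∈ Finset.univ.filter (fun v : FV n => (v.1 : ℕ) = m % n), f v

/-!
Call `a^i` the hub of the copy `J^i` and `b^i, c^i, d^i` its leaves. Domination of the hub puts a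
leaf of every copy in `S`. A leaf of `J^{i+1}` is adjacent, besides its hub, to exactly one leaf
of `J^i` and one of `J^{i+2}`, along perfect matchings; so if the hub of `J^{i+1}` is not in `S`,
then dominating its three leaves forces `S` to have at least three leaves in `J^i` and `J^{i+2}`
together. Consequently a copy of weight 1 (a single leaf) has neighbouring copies with at least
three leaves of `S` between them, while a copy between two copies of weight 1 must spend one unit of
its weight on its hub. These two constraints exclude all the patterns.
-/

namespace flowerSnark

variable {n : ℕ}

/-- The matching along which the leaves of the copy `J^i` are joined to those of `J^{i+1}`: the
leaf `(i, s)` is joined to `(i + 1, twist i s)`. It exchanges `c` and `d` on the last copy, which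
has index `n - 1` as copies are numbered from `0`. -/
def twist (i : Fin n) : Equiv.Perm (Fin 4) :=
  if (i : ℕ) + 1 = n then Equiv.swap 2 3 else 1

lemma adj_hub_iff {i j : Fin n} {t : Fin 4} :
    (flowerSnark n).Adj (i, 0) (j, t) ↔ j = i ∧ t ≠ 0 := by
  simp only [flowerSnark, SimpleGraph.fromRel_adj]
  grind

lemma add_one_mod_eq_ite (i : Fin n) :
    ((i : ℕ) + 1) % n = if (i : ℕ) + 1 = n then 0 else (i : ℕ) + 1 := by
  split_ifs with h
  · rw [h, Nat.mod_self]
  · exact Nat.mod_eq_of_lt (by omega)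

lemma adj_leaf_iff [NeZero n] {i j : Fin n} {s t : Fin 4} (hs : s ≠ 0) (ht : t ≠ 0) :
    (flowerSnark n).Adj (i, s) (j, t) ↔ (i, s) ≠ (j, t) ∧
      (j = i + 1 ∧ t = twist i s ∨ i = j + 1 ∧ s = twist j t) := by
  have eq_add_one_iff (i j : Fin n) : j = i + 1 ↔ (i + 1 : ℕ) % n = j := by
    simp [Fin.ext_iff, Fin.val_add, eq_comm]
  simp only [flowerSnark, SimpleGraph.fromRel_adj, eq_add_one_iff, add_one_mod_eq_ite, twist]
  have := i.isLt
  have := j.isLt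
  refine and_congr_right fun _ => or_congr ?_ ?_
  all_goals
    split_ifs with h_last <;> simp only [Equiv.swap_apply_def, Equiv.Perm.one_apply] <;> grind

end flowerSnark

section copyLeaves

variable {n : ℕ} [NeZero n]

/-- The leaves of the copy `J^(m mod n)` that lie in `S`, with `1`, `2`, `3` for `b`, `c`, `d`. -/
def copyLeaves (S : Set (FV n)) (m : ℕ) : Set (Fin 4) :=
  {t | (Fin.ofNat n m, t) ∈ S} \ {0}

variable {S : Set (FV n)} {m : ℕ}

lemma copyWeight_eq_ncard : copyWeight S m = {t | (Fin.ofNat n m, t) ∈ S}.ncard := by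
  have slice_eq_image : S ∩ {v : FV n | (v.1 : ℕ) = m % n} =
      Prod.mk (Fin.ofNat n m) '' {t | (Fin.ofNat n m, t) ∈ S} := by
    ext ⟨i, t⟩
    have mem_copy_iff : (i : ℕ) = m % n ↔ Fin.ofNat n m = i := by
      rw [Fin.ext_iff, Fin.val_ofNat, eq_comm]
    simp only [Set.mem_inter_iff, Set.mem_ofPred_eq, Set.mem_image, Prod.mk.injEq, mem_copy_iff]
    grind
  rw [copyWeight, slice_eq_image, Set.ncard_image_of_injective _ (Prod.mk_right_injective _)]

lemma copyWeight_eq_of_hub_mem (hub : (Fin.ofNat n m, 0) ∈ S) :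
    copyWeight S m = (copyLeaves S m).ncard + 1 := by
  rw [copyWeight_eq_ncard, copyLeaves, Set.ncard_sdiff_singleton_add_one]
  exact hub

variable (S m) in
lemma ncard_copyLeaves_le_copyWeight : (copyLeaves S m).ncard ≤ copyWeight S m := by
  rw [copyWeight_eq_ncard]
  exact Set.ncard_le_ncard Set.sdiff_subset

end copyLeaves

namespace TotalDominating

open flowerSnark

variable {n : ℕ} [NeZero n] {S : Set (FV n)} {m : ℕ}

lemma one_le_ncard_copyLeaves (hS : TotalDominating n S) (m : ℕ) : 1 ≤ (copyLeaves S m).ncard := by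
  obtain ⟨⟨i, t⟩, h_mem, h_adj⟩ := hS (Fin.ofNat n m, 0)
  obtain ⟨rfl, ht⟩ := adj_hub_iff.1 h_adj
  exact (Set.ncard_pos (Set.toFinite _)).2 ⟨t, h_mem, ht⟩

lemma three_le_ncard_copyLeaves_add_of_hub_notMem (hS : TotalDominating n S)
    (hub : (Fin.ofNat n (m + 1), 0) ∉ S) :
    3 ≤ (copyLeaves S m).ncard + (copyLeaves S (m + 2)).ncard := by
  have ofNat_succ (k : ℕ) : Fin.ofNat n (k + 1) = Fin.ofNat n k + 1 := by
    simp [Fin.ext_iff, Fin.val_add]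
  have cover : ({0}ᶜ : Set (Fin 4)) ⊆ twist (Fin.ofNat n m) '' copyLeaves S m ∪
      (twist (Fin.ofNat n (m + 1))).symm '' copyLeaves S (m + 2) := by
    intro t ht
    obtain ⟨⟨i, s⟩, h_mem, h_adj⟩ := hS (Fin.ofNat n (m + 1), t)
    have hs : s ≠ 0 := by
      rintro rfl
      obtain ⟨rfl, -⟩ := adj_hub_iff.1 h_adj.symm
      exact hub h_mem
    obtain ⟨-, ⟨rfl, rfl⟩ | ⟨h_next, rfl⟩⟩ := (adj_leaf_iff ht hs).1 h_adj
    · rw [← ofNat_succ] at h_mem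
      exact .inr ⟨_, ⟨h_mem, hs⟩, Equiv.symm_apply_apply _ _⟩
    · obtain rfl : Fin.ofNat n m = i := add_right_cancel ((ofNat_succ m).symm.trans h_next)
      exact .inl ⟨s, ⟨h_mem, hs⟩, rfl⟩
  calc
    3 = ({0}ᶜ : Set (Fin 4)).ncard := by
      rw [Set.ncard_compl, Set.ncard_singleton, Nat.card_fin]
    _ ≤ _ := Set.ncard_le_ncard cover
    _ ≤ _ := Set.ncard_union_le _ _
    _ ≤ _ := add_le_add Set.ncard_image_le Set.ncard_image_le

lemma three_le_ncard_copyLeaves_add (hS : TotalDominating n S) (h : copyWeight S (m + 1) = 1) :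
    3 ≤ (copyLeaves S m).ncard + (copyLeaves S (m + 2)).ncard := by
  refine hS.three_le_ncard_copyLeaves_add_of_hub_notMem fun hub => ?_
  have := copyWeight_eq_of_hub_mem hub
  have := hS.one_le_ncard_copyLeaves (m + 1)
  omega

lemma copyWeight_eq_ncard_copyLeaves_add_one (hS : TotalDominating n S) (h : copyWeight S m = 1)
    (h' : copyWeight S (m + 2) = 1) :
    copyWeight S (m + 1) = (copyLeaves S (m + 1)).ncard + 1 := by
  refine copyWeight_eq_of_hub_mem ?_
  by_contra hub
  have := hS.three_le_ncard_copyLeaves_add_of_hub_notMem hub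
  have := ncard_copyLeaves_le_copyWeight S m
  have := ncard_copyLeaves_le_copyWeight S (m + 2)
  omega

end TotalDominating

/-- If `n ≥ 3` and `S` is a total dominating set of the flower snark `J_n`,
then `S` contains none of the patterns 111, 1121 (equivalently 1211 read in
reverse), or 12121 of weights on consecutive copies (indices mod `n`). -/
theorem flowerSnark_totalDominating_patterns (n : ℕ) (hn : 3 ≤ n)
    (S : Set (FV n)) (hS : TotalDominating n S) :
    (¬ ∃ i : Fin n, copyWeight S (i : ℕ) = 1 ∧ copyWeight S ((i : ℕ) + 1) = 1 ∧
        copyWeight S ((i : ℕ) + 2) = 1) ∧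
    (¬ ∃ i : Fin n, copyWeight S (i : ℕ) = 1 ∧ copyWeight S ((i : ℕ) + 1) = 1 ∧
        copyWeight S ((i : ℕ) + 2) = 2 ∧ copyWeight S ((i : ℕ) + 3) = 1) ∧
    (¬ ∃ i : Fin n, copyWeight S (i : ℕ) = 1 ∧ copyWeight S ((i : ℕ) + 1) = 2 ∧
        copyWeight S ((i : ℕ) + 2) = 1 ∧ copyWeight S ((i : ℕ) + 3) = 1) ∧
    (¬ ∃ i : Fin n, copyWeight S (i : ℕ) = 1 ∧ copyWeight S ((i : ℕ) + 1) = 2 ∧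
        copyWeight S ((i : ℕ) + 2) = 1 ∧ copyWeight S ((i : ℕ) + 3) = 2 ∧
        copyWeight S ((i : ℕ) + 4) = 1) := by
  have : NeZero n := ⟨by omega⟩
  refine ⟨?_, ?_, ?_, ?_⟩
  · rintro ⟨i, h₀, h₁, h₂⟩
    have hub₁ := hS.copyWeight_eq_ncard_copyLeaves_add_one h₀ h₂
    have leaves₁ := hS.one_le_ncard_copyLeaves (i + 1)
    omega
  · rintro ⟨i, h₀, h₁, h₂, h₃⟩
    have leaves₀₂ := hS.three_le_ncard_copyLeaves_add h₁
    have hub₂ : copyWeight S (i + 2) = (copyLeaves S (i + 2)).ncard + 1 :=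
      hS.copyWeight_eq_ncard_copyLeaves_add_one h₁ h₃
    linarith [ncard_copyLeaves_le_copyWeight S i]
  · rintro ⟨i, h₀, h₁, h₂, h₃⟩
    have leaves₁₃ : 3 ≤ (copyLeaves S (i + 1)).ncard + (copyLeaves S (i + 3)).ncard :=
      hS.three_le_ncard_copyLeaves_add h₂
    have hub₁ := hS.copyWeight_eq_ncard_copyLeaves_add_one h₀ h₂
    linarith [ncard_copyLeaves_le_copyWeight S (i + 3)]
  · rintro ⟨i, h₀, h₁, h₂, h₃, h₄⟩
    have leaves₁₃ : 3 ≤ (copyLeaves S (i + 1)).ncard + (copyLeaves S (i + 3)).ncard :=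
      hS.three_le_ncard_copyLeaves_add h₂
    have hub₁ := hS.copyWeight_eq_ncard_copyLeaves_add_one h₀ h₂
    have hub₃ : copyWeight S (i + 3) = (copyLeaves S (i + 3)).ncard + 1 :=
      hS.copyWeight_eq_ncard_copyLeaves_add_one h₂ h₄
    omega
end

section
/- For every integer n ≥ 4, the total domination number of the flower snark J_n is at least ⌈3n/2⌉. -/
/-!
Write `w i` for the number of vertices of a total dominating set `S` in copy `i`, and `t i` for the
number of those other than `a`. Dominating `a` in copy `i` takes `1 ≤ t i`. If `a` in copy `i` is
not in `S`, then `b`, `c`, `d` of that copy are dominated from copies `i - 1` and `i + 1`, by three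
different vertices, so `3 ≤ t (i - 1) + t (i + 1)`. In either case
`3 + t i ≤ t (i - 1) + t (i + 1) + w i`, and summing cyclically gives `3 n ≤ ∑ t + ∑ w ≤ 2 |S|`.
-/

theorem ncard_eq_sum_ncard_preimage_mk {α β : Type*} [Fintype α] [Finite β] (S : Set (α × β)) :
    S.ncard = ∑ a, (Prod.mk a ⁻¹' S).ncard := by
  let e : S ≃ Σ a, Prod.mk a ⁻¹' S :=
    { toFun x := ⟨x.1.1, x.1.2, x.2⟩
      invFun y := ⟨(y.1, y.2.1), y.2.2⟩ }
  simp only [← Nat.card_coe_set_eq, Nat.card_congr e, Nat.card_sigma]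

/-- The vertices of `S` other than `a` in copy `i`, as a set of labels. -/
def outerLabels {n : ℕ} (S : Set (FV n)) (i : Fin n) : Set (Fin 4) :=
  Prod.mk i ⁻¹' S \ {0}

section Twist

variable {n : ℕ}

/-- The matching of labels along the edges from copy `i` to copy `i + 1`: it exchanges `c` and `d`
between the last copy and the first, and is the identity elsewhere. -/
def twist (i : Fin n) : Equiv.Perm (Fin 4) :=
  if (i : ℕ) + 1 = n then Equiv.swap 2 3 else 1

@[simp]
theorem twist_apply_eq_zero_iff (i : Fin n) (j : Fin 4) : twist i j = 0 ↔ j = 0 := by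
  unfold twist
  split_ifs
  · revert j; decide
  · rfl

theorem succ_edge_iff [NeZero n] {p q : Fin n} {j l : Fin 4} :
    (((p : ℕ) + 1) % n = (q : ℕ) ∧ j = 1 ∧ l = 1) ∨
      ((p : ℕ) + 1 = (q : ℕ) ∧ j = 2 ∧ l = 2) ∨
      ((p : ℕ) + 1 = (q : ℕ) ∧ j = 3 ∧ l = 3) ∨
      ((p : ℕ) = n - 1 ∧ (q : ℕ) = 0 ∧ j = 2 ∧ l = 3) ∨
      ((p : ℕ) = n - 1 ∧ (q : ℕ) = 0 ∧ j = 3 ∧ l = 2) ↔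
    q = p + 1 ∧ j ≠ 0 ∧ l = twist p j := by
  have hswap : Equiv.swap (2 : Fin 4) 3 1 = 1 := by decide
  have hsucc : q = p + 1 ↔ ((p : ℕ) + 1) % n = q := by
    simp [Fin.ext_iff, Fin.val_add, eq_comm]
  rw [hsucc, twist]
  obtain hlt | hlast : (p : ℕ) + 1 < n ∨ (p : ℕ) + 1 = n := by lia
  · have hmod : ((p : ℕ) + 1) % n = p + 1 := Nat.mod_eq_of_lt hlt
    rw [if_neg hlt.ne]
    fin_cases j <;> simp <;> lia
  · have hmod : ((p : ℕ) + 1) % n = 0 := by rw [hlast, Nat.mod_self]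
    rw [if_pos hlast]
    fin_cases j <;> simp [hswap] <;> lia

theorem flowerSnark_adj_iff [NeZero n] {i k : Fin n} {j l : Fin 4} :
    (flowerSnark n).Adj (i, j) (k, l) ↔ (i, j) ≠ (k, l) ∧
      (i = k ∧ (j = 0 ↔ l ≠ 0) ∨ k = i + 1 ∧ j ≠ 0 ∧ l = twist i j ∨
        i = k + 1 ∧ l ≠ 0 ∧ j = twist k l) := by
  simp only [flowerSnark, SimpleGraph.fromRel_adj, succ_edge_iff]
  grind

end Twist

theorem totalDominating_univ (n : ℕ) : TotalDominating n Set.univ := by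
  rintro ⟨i, j⟩
  have := i.neZero
  by_cases hj : j = 0
  · exact ⟨(i, 1), trivial, by simp [flowerSnark_adj_iff, hj]⟩
  · exact ⟨(i, 0), trivial, by simp [flowerSnark_adj_iff, hj]⟩

theorem exists_totalDominating_ncard_eq (n : ℕ) :
    ∃ S : Set (FV n), TotalDominating n S ∧ S.ncard = totalDominationNumber n :=
  Nat.sInf_mem (s := {k | ∃ S : Set (FV n), TotalDominating n S ∧ S.ncard = k})
    ⟨_, Set.univ, totalDominating_univ n, rfl⟩

namespace TotalDominating

variable {n : ℕ} {S : Set (FV n)}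

theorem outerLabels_nonempty (hS : TotalDominating n S) (i : Fin n) :
    (outerLabels S i).Nonempty := by
  have := i.neZero
  obtain ⟨⟨k, l⟩, hkl, hadj⟩ := hS (i, 0)
  obtain ⟨rfl, hl⟩ : i = k ∧ l ≠ 0 := by
    grind [flowerSnark_adj_iff, twist_apply_eq_zero_iff]
  exact ⟨l, hkl, hl⟩

theorem compl_zero_subset_image_union_preimage [NeZero n] (hS : TotalDominating n S)
    {i : Fin n} (hi : (i, 0) ∉ S) :
    ({0}ᶜ : Set (Fin 4)) ⊆
      twist (i - 1) '' outerLabels S (i - 1) ∪ twist i ⁻¹' outerLabels S (i + 1) := by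
  intro j hj
  obtain ⟨⟨k, l⟩, hkl, hadj⟩ := hS (i, j)
  obtain ⟨-, ⟨rfl, hjl⟩ | ⟨rfl, -, rfl⟩ | ⟨rfl, hl, rfl⟩⟩ := flowerSnark_adj_iff.mp hadj
  · obtain rfl : l = 0 := by tauto
    exact absurd hkl hi
  · exact .inr ⟨hkl, by simpa using hj⟩
  · rw [add_sub_cancel_right]
    exact .inl ⟨l, ⟨hkl, hl⟩, rfl⟩

theorem three_le_ncard_outerLabels_add [NeZero n] (hS : TotalDominating n S) {i : Fin n}
    (hi : (i, 0) ∉ S) :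
    3 ≤ (outerLabels S (i - 1)).ncard + (outerLabels S (i + 1)).ncard :=
  calc
    3 = ({0}ᶜ : Set (Fin 4)).ncard := by rw [Set.ncard_compl, Set.ncard_singleton, Nat.card_fin]
    _ ≤ _ := Set.ncard_le_ncard (hS.compl_zero_subset_image_union_preimage hi)
    _ ≤ (twist (i - 1) '' outerLabels S (i - 1)).ncard +
        (twist i ⁻¹' outerLabels S (i + 1)).ncard := Set.ncard_union_le _ _
    _ = _ := by
      rw [Set.ncard_image_of_injective _ (twist (i - 1)).injective,
        Set.ncard_preimage_of_injective_subset_range (twist i).injective (by simp)]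

theorem three_add_ncard_outerLabels_le [NeZero n] (hS : TotalDominating n S) (i : Fin n) :
    3 + (outerLabels S i).ncard ≤
      (outerLabels S (i - 1)).ncard + (outerLabels S (i + 1)).ncard +
        (Prod.mk i ⁻¹' S).ncard := by
  by_cases hi : (i, 0) ∈ S
  · have hcopy : (outerLabels S i).ncard + 1 = (Prod.mk i ⁻¹' S).ncard :=
      Set.ncard_sdiff_singleton_add_one hi
    have hprev := (hS.outerLabels_nonempty (i - 1)).ncard_pos
    have hnext := (hS.outerLabels_nonempty (i + 1)).ncard_pos
    lia
  · have hcopy : outerLabels S i = Prod.mk i ⁻¹' S := Set.sdiff_singleton_eq_self hi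
    have := hS.three_le_ncard_outerLabels_add hi
    rw [hcopy]
    lia

theorem three_mul_le_two_mul_ncard (hS : TotalDominating n S) : 3 * n ≤ 2 * S.ncard := by
  obtain rfl | _ := eq_zero_or_neZero n
  · simp
  have hprev : ∑ i, (outerLabels S (i - 1)).ncard = ∑ i, (outerLabels S i).ncard :=
    Equiv.sum_comp (Equiv.subRight 1) fun i => (outerLabels S i).ncard
  have hnext : ∑ i, (outerLabels S (i + 1)).ncard = ∑ i, (outerLabels S i).ncard :=
    Equiv.sum_comp (Equiv.addRight 1) fun i => (outerLabels S i).ncard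
  have hsum := Finset.sum_le_sum fun i (_ : i ∈ Finset.univ) =>
    hS.three_add_ncard_outerLabels_le i
  simp only [Finset.sum_add_distrib, Finset.sum_const, Finset.card_univ, Fintype.card_fin,
    smul_eq_mul, hprev, hnext, ← ncard_eq_sum_ncard_preimage_mk] at hsum
  have houter : ∑ i, (outerLabels S i).ncard ≤ S.ncard := by
    rw [ncard_eq_sum_ncard_preimage_mk S]
    exact Finset.sum_le_sum fun i _ => Set.ncard_le_ncard Set.sdiff_subset
  lia

end TotalDominating

theorem flowerSnark_totalDomination_lower_bound_general (n : ℕ) :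
    ⌈(3 * (n : ℚ)) / 2⌉ ≤ (totalDominationNumber n : ℤ) := by
  obtain ⟨S, hS, hcard⟩ := exists_totalDominating_ncard_eq n
  rw [← hcard, Int.ceil_le, div_le_iff₀' two_pos]
  exact_mod_cast hS.three_mul_le_two_mul_ncard

/-- For every `n ≥ 4`, the total domination number of the flower snark `J_n`
is at least `⌈3n/2⌉`. -/
theorem flowerSnark_totalDomination_lower_bound (n : ℕ) (hn : 4 ≤ n) :
    ⌈(3 * (n : ℚ)) / 2⌉ ≤ (totalDominationNumber n : ℤ) :=
  flowerSnark_totalDomination_lower_bound_general n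
end

section
/- Let n ≥ 4 and let S be a connected dominating set of the flower snark J_n. Suppose there is a copy J^i such that either a^i ∉ S or J^i has weight 2 in S. Then the flower snark J_{n−1} has a connected dominating set of cardinality |S| − |S ∩ {a^i, b^i, c^i, d^i}|. -/
/-!
The copy `J^i` is deleted and `T` is what remains of `S`. The rails leave `J^i` only through its
leaves `b^i, c^i, d^i`, and the two rail neighbours of a leaf become adjacent in `J_{n-1}`. The
hypothesis on `i` makes each connected piece of `S ∩ J^i` contain at most one leaf, so every path
of `S` that makes a detour through `J^i` leaves it next to where it entered: it can be
short-circuited in `J_{n-1}`, which preserves connectedness. A vertex dominated from inside `J^i`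
is dominated after the deletion by the first vertex of `T` on a path of `S` through its dominator.
-/

section Torso

open Relation

variable {V W : Type*} {G : SimpleGraph V} {S : Set V} {f : W ↪ V}

/-- A step along an edge of `G` whose target lies in `S`. The reflexive transitive closure of this
relation is reachability inside `S`, except that the starting point need not lie in `S`. -/
def StepInto (G : SimpleGraph V) (S : Set V) (v w : V) : Prop :=
  G.Adj v w ∧ w ∈ S

lemma reachable_induce_iff_reflTransGen_stepInto {v w : V} (hv : v ∈ S) (hw : w ∈ S) :
    (G.induce S).Reachable ⟨v, hv⟩ ⟨w, hw⟩ ↔ ReflTransGen (StepInto G S) v w := by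
  rw [SimpleGraph.reachable_iff_reflTransGen]
  constructor
  · exact ReflTransGen.lift (p := StepInto G S) Subtype.val (fun _ b hab ↦ ⟨hab, b.2⟩) _ _
  · intro h
    induction h using ReflTransGen.head_induction_on with
    | refl => exact .refl
    | head hstep _ ih => exact .head (SimpleGraph.induce_adj.2 hstep.1) (ih hstep.2)

lemma reflTransGen_stepInto_of_connected_induce (hS : (G.induce S).Connected) {v w : V}
    (hv : v ∈ S) (hw : w ∈ S) : ReflTransGen (StepInto G S) v w :=
  (reachable_induce_iff_reflTransGen_stepInto hv hw).1 (hS.preconnected _ _)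

/-- `Detour G f S u s`: some path of `G` leads from `f u` to `s` and, after its first vertex, stays
among the vertices of `S` outside the range of `f`. -/
def Detour (G : SimpleGraph V) (f : W ↪ V) (S : Set V) (u : W) (s : V) : Prop :=
  ReflTransGen (StepInto G (S \ Set.range f)) (f u) s

/-- The graph on `W` left after deleting the vertices of `G` outside the range of `f`, where two
vertices are joined if they are adjacent in `G` or linked by a path of `G` whose interior consists
of deleted vertices of `S`. -/
def torso (G : SimpleGraph V) (f : W ↪ V) (S : Set V) : SimpleGraph W :=
  SimpleGraph.fromRel fun u v ↦ ∃ s, Detour G f S u s ∧ G.Adj s (f v)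

lemma Detour.torso_adj {u v : W} {s : V} (h : Detour G f S u s) (hs : G.Adj s (f v))
    (huv : u ≠ v) : (torso G f S).Adj u v :=
  (SimpleGraph.fromRel_adj _ _ _).2 ⟨huv, .inl ⟨s, h, hs⟩⟩

lemma torso_le {H : SimpleGraph W}
    (h : ∀ u v s, u ≠ v → Detour G f S u s → G.Adj s (f v) → H.Adj u v) : torso G f S ≤ H := by
  intro u v huv
  obtain ⟨hne, ⟨s, hs, hadj⟩ | ⟨s, hs, hadj⟩⟩ := (SimpleGraph.fromRel_adj _ _ _).1 huv
  · exact h u v s hne hs hadj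
  · exact (h v u s hne.symm hs hadj).symm

lemma Detour.eq_of_apply {u v : W} (h : Detour G f S u (f v)) : u = v := by
  obtain heq | ⟨_, _, hstep⟩ := ReflTransGen.cases_tail h
  · exact (f.injective heq).symm
  · exact absurd ⟨v, rfl⟩ hstep.2.2

lemma Detour.reflTransGen_stepInto_torso {u t : W} {s : V} (hus : Detour G f S u s)
    (hst : ReflTransGen (StepInto G S) s (f t)) :
    ReflTransGen (StepInto (torso G f S) (f ⁻¹' S)) u t := by
  induction hst using ReflTransGen.head_induction_on generalizing u with
  | refl => rw [hus.eq_of_apply]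
  | @head s s' hstep _ ih =>
    by_cases hs' : s' ∈ Set.range f
    · obtain ⟨v, rfl⟩ := hs'
      have hvt := ih (u := v) .refl
      obtain rfl | huv := eq_or_ne u v
      · exact hvt
      · exact .head ⟨hus.torso_adj hstep.1 huv, hstep.2⟩ hvt
    · exact ih (hus.tail ⟨hstep.1, hstep.2, hs'⟩)

lemma connected_induce_torso (hS : (G.induce S).Connected) (hT : (f ⁻¹' S).Nonempty) :
    ((torso G f S).induce (f ⁻¹' S)).Connected := by
  have := hT.to_subtype
  refine ⟨fun ⟨u, hu⟩ ⟨v, hv⟩ ↦ (reachable_induce_iff_reflTransGen_stepInto hu hv).2 ?_⟩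
  exact Detour.reflTransGen_stepInto_torso .refl
    (reflTransGen_stepInto_of_connected_induce hS hu hv)

lemma exists_torso_adj_of_adj (hS : (G.induce S).Connected) (hT : (f ⁻¹' S).Nonempty) {v : W}
    (hv : f v ∉ S) {w : V} (hw : w ∈ S) (hvw : G.Adj (f v) w) :
    ∃ u ∈ f ⁻¹' S, (torso G f S).Adj v u := by
  obtain ⟨t, ht⟩ := hT
  have hpath : ReflTransGen (StepInto G S) (f v) (f t) :=
    .head ⟨hvw, hw⟩ (reflTransGen_stepInto_of_connected_induce hS hw ht)
  obtain rfl | ⟨u, ⟨hvu, hu⟩, -⟩ := (Detour.reflTransGen_stepInto_torso .refl hpath).cases_head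
  · exact absurd ht hv
  · exact ⟨u, hu, hvu⟩

end Torso

namespace flowerSnark

section Adjacency

variable {n : ℕ} {v w : FV n}

/-- `w` follows `v` on the cycle of the `b` vertices or on the cycle of the `c` and `d` vertices.
The two latter labels are interchanged on passing from the last copy to the first. -/
def RailStep (v w : FV n) : Prop :=
  v.2 ≠ 0 ∧ (((v.1 : ℕ) + 1 = w.1 ∧ w.2 = v.2) ∨
    ((v.1 : ℕ) + 1 = n ∧ (w.1 : ℕ) = 0 ∧ w.2 = Equiv.swap 2 3 v.2))

lemma adj_iff : (flowerSnark n).Adj v w ↔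
    v ≠ w ∧ (v.1 = w.1 ∧ (v.2 = 0 ∧ w.2 ≠ 0 ∨ w.2 = 0 ∧ v.2 ≠ 0) ∨
      RailStep v w ∨ RailStep w v) := by
  have succ_mod_eq_iff (a b : Fin n) :
      ((a : ℕ) + 1) % n = b ↔ (a : ℕ) + 1 = b ∨ (a : ℕ) + 1 = n ∧ (b : ℕ) = 0 := by
    obtain h | h : (a : ℕ) + 1 = n ∨ (a : ℕ) + 1 < n := by omega
    · rw [h, Nat.mod_self]; omega
    · rw [Nat.mod_eq_of_lt h]; omega
  obtain ⟨a, x⟩ := v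
  obtain ⟨b, y⟩ := w
  simp only [flowerSnark, SimpleGraph.fromRel_adj, RailStep, succ_mod_eq_iff, Fin.ext_iff]
  refine and_congr_right fun _ ↦ ?_
  fin_cases x <;> fin_cases y <;> simp [Equiv.swap_apply_def] <;> omega

lemma RailStep.adj (h : RailStep v w) (hne : v ≠ w) : (flowerSnark n).Adj v w :=
  adj_iff.2 ⟨hne, .inr (.inl h)⟩

lemma RailStep.right_unique {w' : FV n} (h : RailStep v w) (h' : RailStep v w') : w = w' := by
  simp only [RailStep, Prod.ext_iff, Fin.ext_iff] at *
  omega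

lemma RailStep.left_unique {v' : FV n} (h : RailStep v w) (h' : RailStep v' w) : v = v' := by
  obtain ⟨-, ⟨hfst, hsnd⟩ | ⟨hfst, hw, hsnd⟩⟩ := h <;>
    obtain ⟨-, ⟨hfst', hsnd'⟩ | ⟨hfst', hw', hsnd'⟩⟩ := h'
  · exact Prod.ext (by omega) (hsnd.symm.trans hsnd')
  · omega
  · omega
  · exact Prod.ext (by omega) ((Equiv.swap 2 3).injective (hsnd.symm.trans hsnd'))

lemma RailStep.snd_ne_zero (h : RailStep v w) : w.2 ≠ 0 := by
  obtain ⟨hv, ⟨-, h⟩ | ⟨-, -, h⟩⟩ := h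
  · rwa [h]
  · rw [h, ne_eq, Equiv.swap_apply_eq_iff]; exact hv

lemma RailStep.fst_ne (hn : n ≠ 1) (h : RailStep v w) : v.1 ≠ w.1 := by
  simp only [RailStep, ne_eq, Fin.ext_iff] at *
  omega

lemma snd_eq_zero_iff_of_adj (hn : n ≠ 1) (h : (flowerSnark n).Adj v w) (hvw : v.1 = w.1) :
    v.2 = 0 ↔ w.2 ≠ 0 := by
  obtain ⟨-, h | h | h⟩ := adj_iff.1 h
  · tauto
  · exact absurd hvw (h.fst_ne hn)
  · exact absurd hvw.symm (h.fst_ne hn)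

lemma railStep_or_railStep_of_adj (h : (flowerSnark n).Adj v w) (hvw : v.1 ≠ w.1) :
    RailStep v w ∨ RailStep w v :=
  (adj_iff.1 h).2.resolve_left fun h ↦ hvw h.1

lemma snd_ne_zero_of_adj (h : (flowerSnark n).Adj v w) (hvw : v.1 ≠ w.1) : v.2 ≠ 0 :=
  (railStep_or_railStep_of_adj h hvw).elim And.left RailStep.snd_ne_zero

lemma exists_mem_of_dominating {S : Set (FV n)} (hS : Dominating n S) (i : Fin n) :
    ∃ x, (i, x) ∈ S := by
  by_cases h0 : (i, (0 : Fin 4)) ∈ S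
  · exact ⟨0, h0⟩
  · obtain ⟨⟨j, x⟩, hw, hadj⟩ := hS _ h0
    obtain rfl : i = j := by_contra fun hij ↦ snd_ne_zero_of_adj hadj hij rfl
    exact ⟨x, hw⟩

end Adjacency

/-- The labels of those of the vertices `b^i`, `c^i`, `d^i`, the leaves of the star spanned by the
copy `J^i`, that lie in `S`. -/
def leaves {n : ℕ} (S : Set (FV n)) (i : Fin n) : Set (Fin 4) :=
  {x | x ≠ 0 ∧ (i, x) ∈ S}

section SkipCopy

variable {m : ℕ} {i : Fin (m + 1)} {S : Set (FV (m + 1))}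

/-- The embedding of the vertices of `J_m` into those of `J_{m+1}` whose range misses exactly the
copy `J^i`. -/
def skipCopy (i : Fin (m + 1)) : FV m ↪ FV (m + 1) :=
  i.succAboveEmb.prodMap (.refl _)

lemma skipCopy_fst_ne (u : FV m) : (skipCopy i u).1 ≠ i :=
  Fin.succAbove_ne i u.1

lemma range_skipCopy : Set.range (skipCopy i) = {v | v.1 = i}ᶜ := by
  ext ⟨j, x⟩
  simp [skipCopy]

lemma val_skipCopy_fst (u : FV m) :
    ((skipCopy i u).1 : ℕ) = if (u.1 : ℕ) < i then (u.1 : ℕ) else u.1 + 1 := by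
  change (i.succAbove u.1 : ℕ) = _
  simp only [Fin.succAbove, Fin.lt_def, Fin.val_castSucc]
  split_ifs <;> rfl

lemma skipCopy_snd (u : FV m) : (skipCopy i u).2 = u.2 := rfl

lemma railStep_of_railStep_skipCopy {u v : FV m} (h : RailStep (skipCopy i u) (skipCopy i v)) :
    RailStep u v := by
  simp only [RailStep, val_skipCopy_fst, skipCopy_snd] at h ⊢
  obtain ⟨hu0, ⟨hfst, hsnd⟩ | ⟨hfst, hfst', hsnd⟩⟩ := h
  · refine ⟨hu0, .inl ⟨?_, hsnd⟩⟩
    split_ifs at hfst <;> omega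
  · refine ⟨hu0, .inr ⟨?_, ?_, hsnd⟩⟩ <;> split_ifs at hfst hfst' <;> omega

lemma railStep_of_railStep_removed {u v : FV m} {x : Fin 4} (hu : RailStep (skipCopy i u) (i, x))
    (hv : RailStep (i, x) (skipCopy i v)) : RailStep u v := by
  simp only [RailStep, val_skipCopy_fst, skipCopy_snd] at hu hv ⊢
  obtain ⟨hu0, ⟨hui, rfl⟩ | ⟨hui, hi, rfl⟩⟩ := hu <;> refine ⟨hu0, ?_⟩ <;>
    split_ifs at hui hv <;> omega

lemma adj_of_adj_skipCopy {u v : FV m}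
    (h : (flowerSnark (m + 1)).Adj (skipCopy i u) (skipCopy i v)) : (flowerSnark m).Adj u v := by
  obtain ⟨hne, ⟨hfst, hsnd⟩ | hrail⟩ := adj_iff.1 h
  · exact adj_iff.2 ⟨ne_of_apply_ne _ hne, .inl ⟨Fin.succAbove_right_injective hfst, hsnd⟩⟩
  · exact adj_iff.2 ⟨ne_of_apply_ne _ hne,
      .inr (hrail.imp railStep_of_railStep_skipCopy railStep_of_railStep_skipCopy)⟩

lemma adj_of_adj_removed {u v : FV m} {x : Fin 4} (huv : u ≠ v)
    (hu : (flowerSnark (m + 1)).Adj (i, x) (skipCopy i u))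
    (hv : (flowerSnark (m + 1)).Adj (i, x) (skipCopy i v)) : (flowerSnark m).Adj u v := by
  have hne : skipCopy i u ≠ skipCopy i v := (skipCopy i).injective.ne huv
  obtain hu | hu := railStep_or_railStep_of_adj hu (skipCopy_fst_ne u).symm <;>
    obtain hv | hv := railStep_or_railStep_of_adj hv (skipCopy_fst_ne v).symm
  · exact absurd (hu.right_unique hv) hne
  · exact ((railStep_of_railStep_removed hv hu).adj huv.symm).symm
  · exact (railStep_of_railStep_removed hu hv).adj huv
  · exact absurd (hu.left_unique hv) hne

lemma exists_leaf_of_detour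
    (hleaf : (i, 0) ∈ S → (leaves S i).Subsingleton) {u : FV m} {s : FV (m + 1)}
    (h : Detour (flowerSnark (m + 1)) (skipCopy i) S u s) :
    s = skipCopy i u ∨ ∃ x ∈ leaves S i,
      (flowerSnark (m + 1)).Adj (i, x) (skipCopy i u) ∧ (s = (i, x) ∨ s = (i, 0) ∧ (i, 0) ∈ S) := by
  have hm : m + 1 ≠ 1 := by have := u.1.pos; omega
  induction h with
  | refl => exact .inl rfl
  | @tail s t _ hst ih =>
    right
    obtain ⟨hadj, htS, htrange⟩ := hst
    obtain ⟨j, y⟩ := t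
    obtain rfl : j = i := by simpa [range_skipCopy] using htrange
    obtain rfl | ⟨x, hx, hxu, rfl | ⟨rfl, h0⟩⟩ := ih
    · exact ⟨y, ⟨snd_ne_zero_of_adj hadj.symm (skipCopy_fst_ne u).symm, htS⟩, hadj.symm, .inl rfl⟩
    · obtain rfl : y = 0 := by_contra fun hy ↦ hx.1 ((snd_eq_zero_iff_of_adj hm hadj rfl).2 hy)
      exact ⟨x, hx, hxu, .inr ⟨rfl, htS⟩⟩
    · have hy : y ≠ 0 := (snd_eq_zero_iff_of_adj hm hadj rfl).1 rfl
      exact ⟨x, hx, hxu, .inl (by rw [hleaf h0 hx ⟨hy, htS⟩])⟩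

lemma torso_skipCopy_le (hleaf : (i, 0) ∈ S → (leaves S i).Subsingleton) :
    torso (flowerSnark (m + 1)) (skipCopy i) S ≤ flowerSnark m := by
  refine torso_le fun u v s huv hus hsv ↦ ?_
  obtain rfl | ⟨x, -, hxu, rfl | ⟨rfl, -⟩⟩ := exists_leaf_of_detour hleaf hus
  · exact adj_of_adj_skipCopy hsv
  · exact adj_of_adj_removed huv hxu hsv
  · exact absurd rfl (snd_ne_zero_of_adj hsv (skipCopy_fst_ne v).symm)

lemma connectedDominating_preimage_skipCopy [NeZero m] (hS : ConnectedDominating (m + 1) S)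
    (hleaf : (i, 0) ∈ S → (leaves S i).Subsingleton) :
    ConnectedDominating m (skipCopy i ⁻¹' S) := by
  obtain ⟨hdom, hconn⟩ := hS
  have hle := torso_skipCopy_le hleaf
  have hT : (skipCopy i ⁻¹' S).Nonempty :=
    (exists_mem_of_dominating hdom (i.succAbove 0)).imp' (Prod.mk 0) fun _ hx ↦ hx
  constructor
  · intro v hv
    obtain ⟨w, hw, hvw⟩ := hdom _ hv
    obtain ⟨u, hu, hvu⟩ := exists_torso_adj_of_adj hconn hT hv hw hvw
    exact ⟨u, hu, hle hvu⟩
  · exact (connected_induce_torso hconn hT).mono (SimpleGraph.comap_monotone _ hle)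

end SkipCopy

section CopyWeight

lemma copyWeight_val {n : ℕ} (S : Set (FV n)) (i : Fin n) :
    copyWeight S (i : ℕ) = (S ∩ {v | v.1 = i}).ncard := by
  simp only [copyWeight, Nat.mod_eq_of_lt i.2, Fin.ext_iff]

lemma subsingleton_leaves_of_copyWeight_le_two {n : ℕ} {S : Set (FV n)} {i : Fin n}
    (hi : copyWeight S (i : ℕ) ≤ 2) (h0 : (i, 0) ∈ S) : (leaves S i).Subsingleton := by
  rintro x ⟨hx, hxS⟩ y ⟨hy, hyS⟩
  by_contra hxy
  rw [copyWeight_val] at hi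
  refine hi.not_gt ((Set.two_lt_ncard).2
    ⟨(i, 0), ⟨h0, rfl⟩, (i, x), ⟨hxS, rfl⟩, (i, y), ⟨hyS, rfl⟩, ?_⟩)
  simp [hx.symm, hy.symm, hxy]

lemma ncard_preimage_skipCopy {m : ℕ} (S : Set (FV (m + 1))) (i : Fin (m + 1)) :
    (skipCopy i ⁻¹' S).ncard = S.ncard - copyWeight S (i : ℕ) := by
  have himage : skipCopy i '' (skipCopy i ⁻¹' S) = S \ {v | v.1 = i} := by
    rw [Set.image_preimage_eq_inter_range, range_skipCopy, Set.sdiff_eq]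
  rw [← Set.ncard_image_of_injective _ (skipCopy i).injective, himage, copyWeight_val,
    ← Set.ncard_inter_add_ncard_sdiff_eq_ncard S {v | v.1 = i}, Nat.add_sub_cancel_left]

end CopyWeight

end flowerSnark

/-- If `n ≥ 4`, `S` is a connected dominating set of the flower snark `J_n`,
and there is a copy `J^i` with `a^i ∉ S` or with weight 2 in `S`, then
`J_{n-1}` has a connected dominating set of cardinality
`|S| - |S ∩ {a^i, b^i, c^i, d^i}|`. -/
theorem flowerSnark_connectedDominating_remove (n : ℕ) (hn : 4 ≤ n)
    (S : Set (FV n)) (hS : ConnectedDominating n S)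
    (i : Fin n) (hi : (i, (0 : Fin 4)) ∉ S ∨ copyWeight S (i : ℕ) = 2) :
    ∃ T : Set (FV (n - 1)), ConnectedDominating (n - 1) T ∧
      T.ncard = S.ncard - copyWeight S (i : ℕ) := by
  obtain ⟨m, rfl⟩ : ∃ m, n = m + 1 := ⟨n - 1, by omega⟩
  have : NeZero (m + 1 - 1) := ⟨by omega⟩
  have hleaf (h0 : (i, 0) ∈ S) : (flowerSnark.leaves S i).Subsingleton :=
    flowerSnark.subsingleton_leaves_of_copyWeight_le_two (hi.resolve_left (not_not.2 h0)).le h0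
  exact ⟨flowerSnark.skipCopy i ⁻¹' S, flowerSnark.connectedDominating_preimage_skipCopy hS hleaf,
    flowerSnark.ncard_preimage_skipCopy S i⟩
end

section
/- Let n ≥ 4 and let S be a connected dominating set of the flower snark J_n. Suppose there is a copy J^i with weight 4 in S (i.e. all of a^i, b^i, c^i, d^i belong to S). Then for every positive integer k ≤ n − 3, the flower snark J_{n−k} has a connected dominating set of cardinality |S| − |S ∩ ({a^{i+1},b^{i+1},c^{i+1},d^{i+1}} ∪ … ∪ {a^{i+k},b^{i+k},c^{i+k},d^{i+k}})| (indices mod n). -/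
/-!
After rotating the snark so that the full copy `J^i` is the one which becomes the last copy of
`J_{n-k}`, contract `J^i, …, J^{i+k}` to that single copy. The contraction sends every edge to an
edge or to a vertex, and images of connected dominating sets under surjections of this kind are
again connected dominating. Since `J^i` lies in the set, the vertices in `J^{i+1}, …, J^{i+k}`
contribute nothing new to the image, while the contraction is injective on the other copies.
-/

section WeakHom

variable {U V W : Type*} {F : SimpleGraph U} {G : SimpleGraph V} {H : SimpleGraph W}

/-- A weak homomorphism of simple graphs: a vertex map sending each edge to an edge or to a single
vertex, so that contractions of edges are allowed. -/
def IsWeakHom (G : SimpleGraph V) (H : SimpleGraph W) (f : V → W) : Prop :=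
  ∀ ⦃v w⦄, G.Adj v w → f v = f w ∨ H.Adj (f v) (f w)

namespace IsWeakHom

lemma id : IsWeakHom G G id := fun _ _ h => .inr h

lemma comp {f : U → V} {g : V → W} (hg : IsWeakHom G H g) (hf : IsWeakHom F G f) :
    IsWeakHom F H (g ∘ f) := fun _ _ h =>
  (hf h).elim (fun h => .inl (congrArg g h)) (@hg _ _)

lemma perm_pow {σ : Equiv.Perm V} (hσ : IsWeakHom G G σ) : ∀ t : ℕ, IsWeakHom G G ⇑(σ ^ t)
  | 0 => id
  | t + 1 => by
    rw [pow_succ, Equiv.Perm.coe_mul]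
    exact (hσ.perm_pow t).comp hσ

lemma fromRel {r : V → V → Prop} {s : W → W → Prop} {f : V → W}
    (h : ∀ ⦃v w⦄, r v w → f v = f w ∨ s (f v) (f w)) :
    IsWeakHom (SimpleGraph.fromRel r) (SimpleGraph.fromRel s) f := by
  intro v w hvw
  rw [SimpleGraph.fromRel_adj] at hvw ⊢
  grind

variable {f : V → W}

lemma reachable (hf : IsWeakHom G H f) {v w : V} (h : G.Reachable v w) :
    H.Reachable (f v) (f w) := by
  rw [SimpleGraph.reachable_iff_reflTransGen] at h ⊢
  refine h.lift' f fun a b hab => ?_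
  obtain heq | hadj := hf hab
  · change Relation.ReflTransGen H.Adj (f a) (f b)
    rw [heq]
  · exact .single hadj

lemma connected_of_surjective (hf : IsWeakHom G H f) (hsurj : f.Surjective) (hG : G.Connected) :
    H.Connected where
  preconnected := hsurj.forall₂.2 fun v w => hf.reachable (hG.preconnected v w)
  nonempty := hG.nonempty.map f

lemma connected_induce_image (hf : IsWeakHom G H f) {S : Set V} (hS : (G.induce S).Connected) :
    (H.induce (f '' S)).Connected := by
  have hfS : IsWeakHom (G.induce S) (H.induce (f '' S)) (S.imageFactorization f) :=
    fun v w hvw => (hf hvw).imp_left Subtype.ext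
  exact hfS.connected_of_surjective Set.imageFactorization_surjective hS

lemma exists_adj_image (hf : IsWeakHom G H f) (hsurj : f.Surjective) {S : Set V}
    (hS : ∀ v ∉ S, ∃ w ∈ S, G.Adj v w) : ∀ v ∉ f '' S, ∃ w ∈ f '' S, H.Adj v w := by
  refine hsurj.forall.2 fun v hv => ?_
  obtain ⟨w, hw, hvw⟩ := hS v fun h => hv ⟨v, h, rfl⟩
  have hne : f v ≠ f w := fun h => hv ⟨w, hw, h.symm⟩
  exact ⟨f w, ⟨w, hw, rfl⟩, (hf hvw).resolve_left hne⟩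

end IsWeakHom

end WeakHom

lemma ConnectedDominating.image {n m : ℕ} {S : Set (FV n)} {f : FV n → FV m}
    (hS : ConnectedDominating n S) (hf : IsWeakHom (flowerSnark n) (flowerSnark m) f)
    (hsurj : f.Surjective) : ConnectedDominating m (f '' S) :=
  ⟨hf.exists_adj_image hsurj hS.1, hf.connected_induce_image hS.2⟩

section CopyIndex

variable {n : ℕ}

lemma fin_val_add_one [NeZero n] (p : Fin n) : ((p + 1 : Fin n) : ℕ) = (p + 1) % n := by
  rw [Fin.val_add, Fin.val_one', Nat.add_mod_mod]

lemma fin_val_add_one_eq_ite [NeZero n] (p : Fin n) :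
    ((p + 1 : Fin n) : ℕ) = if (p : ℕ) + 1 = n then 0 else (p : ℕ) + 1 := by
  rw [fin_val_add_one]
  split_ifs with h
  · rw [h, Nat.mod_self]
  · exact Nat.mod_eq_of_lt (by omega)

lemma exists_eq_add_mod_iff {k : ℕ} (hk : k < n) (i p : Fin n) :
    (∃ j : ℕ, 1 ≤ j ∧ j ≤ k ∧ (p : ℕ) = (i + j) % n) ↔
      1 ≤ ((p - i : Fin n) : ℕ) ∧ ((p - i : Fin n) : ℕ) ≤ k := by
  have : NeZero n := ⟨by omega⟩
  constructor
  · rintro ⟨j, hj, hjk, hp⟩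
    have hadd : p = i + ⟨j, by omega⟩ := Fin.ext (hp.trans (Fin.val_add i ⟨j, _⟩).symm)
    have hsub : p - i = ⟨j, by omega⟩ := sub_eq_of_eq_add' hadd
    exact hsub ▸ ⟨hj, hjk⟩
  · rintro ⟨hpos, hle⟩
    exact ⟨_, hpos, hle, by rw [← Fin.val_add, add_sub_cancel]⟩

lemma exists_eq_add_mod_iff_le_val {k : ℕ} (hk : k < n) (i p last : Fin n)
    (hlast : (last : ℕ) + 1 = n - k) :
    (∃ j : ℕ, 1 ≤ j ∧ j ≤ k ∧ (p : ℕ) = (i + j) % n) ↔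
      n - k ≤ ((p - i + last : Fin n) : ℕ) := by
  rw [exists_eq_add_mod_iff hk, Fin.val_add_eq_ite]
  split_ifs <;> omega

end CopyIndex

namespace flowerSnark

section Rotation

variable {n : ℕ} [NeZero n]

/-- The rotation `J^p → J^{p+1}` of the flower snark, which exchanges `c` and `d` when it passes
from the last copy to the first. -/
def rotate (n : ℕ) [NeZero n] : Equiv.Perm (FV n) :=
  Equiv.prodShear (Equiv.addRight 1) fun p => if (p : ℕ) + 1 = n then Equiv.swap 2 3 else 1

lemma rotate_apply (v : FV n) :
    rotate n v = (v.1 + 1, if (v.1 : ℕ) + 1 = n then Equiv.swap 2 3 v.2 else v.2) := by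
  simp only [rotate, Equiv.prodShear_apply, Equiv.coe_addRight]
  split_ifs <;> rfl

lemma rotate_snd_eq_zero_iff (v : FV n) : (rotate n v).2 = 0 ↔ v.2 = 0 := by
  have hswap : ∀ x : Fin 4, Equiv.swap 2 3 x = 0 ↔ x = 0 := by decide
  rw [rotate_apply]
  split_ifs
  · exact hswap v.2
  · rfl

/-- The edges of the flower snark, oriented from `a` outwards and along the rotation. -/
def Arc (v w : FV n) : Prop :=
  (v.1 = w.1 ∧ v.2 = 0 ∧ w.2 ≠ 0) ∨ (v.2 ≠ 0 ∧ w = rotate n v)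

lemma eq_fromRel_arc : flowerSnark n = SimpleGraph.fromRel Arc := by
  unfold flowerSnark
  congr 1
  ext ⟨p, x⟩ ⟨q, y⟩
  have hb : Equiv.swap (2 : Fin 4) 3 1 = 1 := by decide
  have hc : Equiv.swap (2 : Fin 4) 3 2 = 3 := by decide
  have hd : Equiv.swap (2 : Fin 4) 3 3 = 2 := by decide
  simp only [Arc, rotate_apply, Prod.mk.injEq, Fin.ext_iff (n := n), ← fin_val_add_one,
    fin_val_add_one_eq_ite]
  obtain rfl | rfl | rfl | rfl : x = 0 ∨ x = 1 ∨ x = 2 ∨ x = 3 := by decide +revert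
  all_goals grind

lemma isWeakHom_rotate : IsWeakHom (flowerSnark n) (flowerSnark n) (rotate n) := by
  rw [eq_fromRel_arc]
  refine .fromRel fun v w hvw => .inr ?_
  obtain ⟨hcopy, hv, hw⟩ | ⟨hv, rfl⟩ := hvw
  · refine .inl ⟨?_, (rotate_snd_eq_zero_iff v).2 hv, (rotate_snd_eq_zero_iff w).not.2 hw⟩
    simp only [rotate_apply, hcopy]
  · exact .inr ⟨(rotate_snd_eq_zero_iff v).not.2 hv, rfl⟩

lemma rotate_pow_fst (t : Fin n) (v : FV n) : ((rotate n ^ (t : ℕ)) v).1 = v.1 + t := by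
  have hpow (j : ℕ) : (((rotate n ^ j) v).1 : ℕ) = (v.1 + j) % n := by
    induction j with
    | zero => exact (Nat.mod_eq_of_lt v.1.isLt).symm
    | succ j ih =>
      rw [pow_succ', Equiv.Perm.mul_apply, rotate_apply, fin_val_add_one, ih, Nat.mod_add_mod,
        add_assoc]
  exact Fin.ext ((hpow t).trans (Fin.val_add v.1 t).symm)

lemma exists_perm_fst_eq_sub_add (i l : Fin n) :
    ∃ ρ : Equiv.Perm (FV n), IsWeakHom (flowerSnark n) (flowerSnark n) ρ ∧
      ∀ v, (ρ v).1 = v.1 - i + l := by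
  refine ⟨rotate n ^ ((l - i : Fin n) : ℕ), isWeakHom_rotate.perm_pow _, fun v => ?_⟩
  rw [rotate_pow_fst]
  abel

end Rotation

section Truncation

variable {n m : ℕ} [NeZero m]

/-- The map `J_n → J_m`, for `m ≤ n`, which contracts the last `n - m + 1` copies to the last copy
of `J_m`. -/
def truncate (m : ℕ) [NeZero m] (v : FV n) : FV m :=
  (⟨min v.1 (m - 1), by have := NeZero.pos m; omega⟩, v.2)

lemma truncate_surjective (hm : m ≤ n) : (truncate m : FV n → FV m).Surjective := by
  rintro ⟨q, x⟩
  refine ⟨(q.castLE hm, x), Prod.ext (Fin.ext ?_) rfl⟩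
  simp only [truncate, Fin.val_castLE]
  omega

lemma truncate_injOn : Set.InjOn (truncate m) {v : FV n | (v.1 : ℕ) < m} := by
  intro v (hv : (v.1 : ℕ) < m) w (hw : (w.1 : ℕ) < m) h
  simp only [truncate, Prod.mk.injEq, Fin.mk.injEq] at h
  exact Prod.ext (Fin.ext (by omega)) h.2

lemma truncate_rotate [NeZero n] (hm : m ≤ n) (v : FV n) :
    truncate m (rotate n v) = truncate m v ∨
      truncate m (rotate n v) = rotate m (truncate m v) := by
  have hmpos := NeZero.pos m
  simp only [truncate, rotate_apply, Prod.ext_iff, Fin.ext_iff, fin_val_add_one_eq_ite]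
  obtain hwrap | hcontracted | hkept :
      (v.1 : ℕ) + 1 = n ∨ m ≤ (v.1 : ℕ) + 1 ∧ (v.1 : ℕ) + 1 < n ∨ (v.1 : ℕ) + 1 < m := by omega
  · have hmin : min (v.1 : ℕ) (m - 1) + 1 = m := by omega
    right
    simp only [hwrap, hmin, if_true, Nat.zero_min, and_self]
  · left
    simp only [hcontracted.2.ne, if_false, and_true]
    omega
  · have hmin : min (v.1 : ℕ) (m - 1) + 1 ≠ m := by omega
    right
    simp only [(hkept.trans_le hm).ne, hmin, if_false, and_true]
    omega

lemma isWeakHom_truncate (hm : m ≤ n) :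
    IsWeakHom (flowerSnark n) (flowerSnark m) (truncate m) := by
  have : NeZero n := ⟨by have := NeZero.pos m; omega⟩
  simp only [eq_fromRel_arc]
  refine .fromRel fun v w hvw => ?_
  obtain ⟨hcopy, hv, hw⟩ | ⟨hv, rfl⟩ := hvw
  · exact .inr (.inl ⟨by simp only [truncate, hcopy], hv, hw⟩)
  · obtain h | h := truncate_rotate hm v
    · exact .inl h.symm
    · exact .inr (.inr ⟨hv, h⟩)

lemma ncard_image_truncate {S : Set (FV n)} (hm : m ≤ n)
    (hS : ∀ v : FV n, (v.1 : ℕ) + 1 = m → v ∈ S) :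
    (truncate m '' S).ncard = (S \ {v | m ≤ v.1}).ncard := by
  have hmpos := NeZero.pos m
  have himage : truncate m '' S = truncate m '' (S \ {v | m ≤ v.1}) := by
    refine (Set.image_mono Set.sdiff_subset).antisymm' ?_
    rintro _ ⟨v, hv, rfl⟩
    by_cases hvm : m ≤ v.1
    · have hlast : m - 1 < n := by omega
      refine ⟨(⟨m - 1, hlast⟩, v.2), ⟨hS _ (Nat.sub_add_cancel hmpos), ?_⟩, ?_⟩
      · exact (Nat.sub_lt hmpos one_pos).not_ge
      · exact Prod.ext (Fin.ext (by simp only [truncate]; omega)) rfl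
    · exact ⟨v, ⟨hv, hvm⟩, rfl⟩
  have hinj : Set.InjOn (truncate m) (S \ {v : FV n | m ≤ v.1}) :=
    truncate_injOn.mono fun v hv => show (v.1 : ℕ) < m from not_le.1 hv.2
  rw [himage, hinj.ncard_image]

end Truncation

end flowerSnark

lemma ConnectedDominating.exists_ncard_eq_sdiff {n m : ℕ} [NeZero m] {S : Set (FV n)}
    (hS : ConnectedDominating n S) (hm : m ≤ n) (hlast : ∀ v : FV n, (v.1 : ℕ) + 1 = m → v ∈ S) :
    ∃ T, ConnectedDominating m T ∧ T.ncard = (S \ {v | m ≤ v.1}).ncard :=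
  ⟨_, hS.image (flowerSnark.isWeakHom_truncate hm) (flowerSnark.truncate_surjective hm),
    flowerSnark.ncard_image_truncate hm hlast⟩

lemma mem_of_copyWeight_eq_four {n : ℕ} {S : Set (FV n)} {v : FV n} (hv : copyWeight S v.1 = 4) :
    v ∈ S := by
  have hfiber : {w : FV n | (w.1 : ℕ) = v.1 % n} = Set.range (Prod.mk v.1) := by
    ext ⟨p, x⟩
    simp [Nat.mod_eq_of_lt v.1.isLt, Fin.ext_iff, eq_comm]
  have hcard : (Set.range (Prod.mk v.1 : Fin 4 → FV n)).ncard = 4 := by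
    rw [← Set.image_univ, Set.ncard_image_of_injective _ (Prod.mk_right_injective v.1)]
    simp
  rw [copyWeight, hfiber] at hv
  have hsub : S ∩ Set.range (Prod.mk v.1) = Set.range (Prod.mk v.1) :=
    Set.eq_of_subset_of_ncard_le Set.inter_subset_right (hcard.trans hv.symm).le
  exact Set.inter_eq_right.1 hsub ⟨v.2, rfl⟩

/-- If `n ≥ 4`, `S` is a connected dominating set of the flower snark `J_n`,
and some copy `J^i` has weight 4 in `S`, then for every `1 ≤ k ≤ n - 3` the
flower snark `J_{n-k}` has a connected dominating set of cardinality
`|S|` minus the number of vertices of `S` in the copies `J^{i+1}, …, J^{i+k}`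
(indices mod `n`). -/
theorem flowerSnark_connectedDominating_weight4 (n : ℕ) (hn : 4 ≤ n)
    (S : Set (FV n)) (hS : ConnectedDominating n S)
    (i : Fin n) (hi : copyWeight S (i : ℕ) = 4) :
    ∀ k : ℕ, 1 ≤ k → k ≤ n - 3 →
      ∃ T : Set (FV (n - k)), ConnectedDominating (n - k) T ∧
        T.ncard = S.ncard -
          (S ∩ {v : FV n | ∃ j : ℕ, 1 ≤ j ∧ j ≤ k ∧
            (v.1 : ℕ) = ((i : ℕ) + j) % n}).ncard := by
  intro k hk hkn
  have : NeZero n := ⟨by omega⟩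
  have : NeZero (n - k) := ⟨by omega⟩
  let last : Fin n := ⟨n - k - 1, by omega⟩
  have hlast : (last : ℕ) + 1 = n - k := Nat.sub_add_cancel (by omega)
  obtain ⟨ρ, hρ, hcopy⟩ := flowerSnark.exists_perm_fst_eq_sub_add i last
  have hfull : ∀ v : FV n, (v.1 : ℕ) + 1 = n - k → v ∈ ρ '' S := by
    refine ρ.surjective.forall.2 fun v hv => ⟨v, mem_of_copyWeight_eq_four ?_, rfl⟩
    have hvi : v.1 - i + last = last := by rw [← hcopy]; exact Fin.ext (by omega)
    rwa [sub_eq_zero.1 (add_eq_right.1 hvi)]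
  have hremoved : {v : FV n | ∃ j : ℕ, 1 ≤ j ∧ j ≤ k ∧ (v.1 : ℕ) = ((i : ℕ) + j) % n} =
      ρ ⁻¹' {v | n - k ≤ v.1} := by
    ext v
    rw [Set.mem_preimage, Set.mem_ofPred_eq, Set.mem_ofPred_eq, hcopy]
    exact exists_eq_add_mod_iff_le_val (by omega) i v.1 last hlast
  obtain ⟨T, hT, hcard⟩ :=
    (hS.image hρ ρ.surjective).exists_ncard_eq_sdiff (Nat.sub_le n k) hfull
  refine ⟨T, hT, ?_⟩
  rw [hcard, hremoved, ← Set.image_sdiff_preimage, Set.ncard_image_of_injective _ ρ.injective]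
  exact Nat.eq_sub_of_add_eq' (Set.ncard_inter_add_ncard_sdiff_eq_ncard S _)
end

section
/- Suppose n ≥ 5 is odd and the connected domination number of the flower snark J_{n−1} equals 2n − 2. If S is a connected dominating set of J_n with |S| = 2n − 1, then the number of copies J^i having weight 4 in S is even. -/
/-!
In a graph of maximum degree `d`, a connected set `S` spans at least `|S| - 1` edges, so at most
`(d - 2) |S| + 2` edges leave `S`. For `J_n` and `|S| < 2 n` this is at most the number of vertices
outside `S`; hence, when `S` dominates, each of them has exactly one neighbour in `S`.

This condition is local. Followed along the strands from a full copy, the weights of successive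
copies read `4, …, 4, 1, 2, …, 2, 1, 4, …`, where between two copies of weight one a single strand
and the hubs are used. Their average, taken from a full copy on, never drops below two. One full
copy would therefore force `|S| ≥ 2 n`, so there is none.
-/

open Finset

/-- `S` is a perfect dominating set of `G`: every vertex outside `S` has exactly one neighbour
in `S`. -/
def IsPerfectDominating {V : Type*} (G : SimpleGraph V) (S : Set V) : Prop :=
  ∀ v ∉ S, ∃! w, w ∈ S ∧ G.Adj v w

section PerfectDomination

variable {V : Type*} [Fintype V] {G : SimpleGraph V} [DecidableRel G.Adj] {S : Finset V}

theorem two_mul_card_le_sum_card_neighborFinset_inter [DecidableEq V]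
    (hconn : (G.induce (S : Set V)).Connected) :
    2 * #S ≤ ∑ v ∈ S, #(G.neighborFinset v ∩ S) + 2 := by
  have hdegree (v : (S : Set V)) :
      (G.induce (S : Set V)).degree v = #(G.neighborFinset v ∩ S) := by
    rw [← SimpleGraph.card_neighborFinset_eq_degree, ← card_map (.subtype _)]
    congr 1
    ext w
    simp [and_comm]
  have hsum : ∑ v ∈ S, #(G.neighborFinset v ∩ S) = 2 * #(G.induce (S : Set V)).edgeFinset := by
    rw [← SimpleGraph.sum_degrees_eq_twice_card_edges, sum_congr rfl fun v _ ↦ hdegree v]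
    exact (sum_coe_sort S fun v ↦ #(G.neighborFinset v ∩ S)).symm
  have htree := hconn.card_vert_le_card_edgeSet_add_one
  rw [Nat.card_coe_set_eq, Set.ncard_coe_finset, Nat.card_eq_fintype_card,
    ← SimpleGraph.edgeFinset_card] at htree
  lia

theorem sum_card_neighborFinset_sdiff [DecidableEq V] (G : SimpleGraph V) [DecidableRel G.Adj]
    (S : Finset V) :
    ∑ v ∈ S, #(G.neighborFinset v \ S) = ∑ v ∈ Sᶜ, #(G.neighborFinset v ∩ S) := by
  have habove (v : V) : G.neighborFinset v \ S = Sᶜ.bipartiteAbove G.Adj v := by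
    ext w; simp [bipartiteAbove, and_comm]
  have hbelow (v : V) : G.neighborFinset v ∩ S = S.bipartiteBelow G.Adj v := by
    ext w; simp [bipartiteBelow, and_comm, G.adj_comm]
  simp only [habove, hbelow, sum_card_bipartiteAbove_eq_sum_card_bipartiteBelow]

theorem isPerfectDominating_of_connected {d : ℕ} (hdegree : ∀ v ∈ S, G.degree v ≤ d)
    (hconn : (G.induce (S : Set V)).Connected) (hdom : ∀ v ∉ S, ∃ w ∈ S, G.Adj v w)
    (hcard : d * #S + 2 ≤ #S + Fintype.card V) : IsPerfectDominating G (S : Set V) := by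
  classical
  have hpos : ∀ v ∈ Sᶜ, 1 ≤ #(G.neighborFinset v ∩ S) := fun v hv ↦ by
    obtain ⟨w, hw, hvw⟩ := hdom v (mem_compl.1 hv)
    exact card_pos.2 ⟨w, by simp [hw, hvw]⟩
  have htotal : ∑ v ∈ Sᶜ, #(G.neighborFinset v ∩ S) ≤ ∑ v ∈ Sᶜ, 1 := by
    have hsplit : ∑ v ∈ S, G.degree v
        = ∑ v ∈ S, #(G.neighborFinset v ∩ S) + ∑ v ∈ Sᶜ, #(G.neighborFinset v ∩ S) := by
      simp only [← sum_card_neighborFinset_sdiff, ← sum_add_distrib, card_inter_add_card_sdiff,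
        SimpleGraph.card_neighborFinset_eq_degree]
    have hdegrees : ∑ v ∈ S, G.degree v ≤ #S * d := sum_le_card_nsmul _ _ _ hdegree
    have hinner := two_mul_card_le_sum_card_neighborFinset_inter hconn
    have hcompl := card_add_card_compl S
    rw [sum_const, smul_eq_mul, mul_one]
    lia
  intro v hv
  have hone : 1 = #(G.neighborFinset v ∩ S) :=
    (sum_eq_sum_iff_of_le hpos).1 (le_antisymm (sum_le_sum hpos) htotal) v (by simpa using hv)
  simpa [and_comm] using card_eq_one_iff_existsUnique.1 hone.symm

end PerfectDomination

/-- The pattern left by a perfect dominating set on successive copies of a flower snark, in which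
`0 : Fin 4` stands for the hub `a` and the other elements for the strands `b`, `c`, `d`. A hub
is joined to the strands of its copy, and a strand to the same strand of the two adjacent copies;
the twist of the snark is to be absorbed in the labelling of the strands. -/
structure IsPerfectStrip (s : ℕ → Finset (Fin 4)) : Prop where
  card_eq_one_of_zero_notMem {j : ℕ} (h : 0 ∉ s j) : #(s j) = 1
  subset_succ {j : ℕ} (h : 0 ∈ s (j + 1)) : s j ⊆ s (j + 1)
  succ_subset {j : ℕ} (h : 0 ∈ s j) : s (j + 1) ⊆ s j
  mem_add_two_iff {j : ℕ} {t : Fin 4} (h : 0 ∉ s (j + 1)) (ht : t ≠ 0) (hts : t ∉ s (j + 1)) :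
    t ∈ s (j + 2) ↔ t ∉ s j

namespace IsPerfectStrip

variable {s : ℕ → Finset (Fin 4)} {j : ℕ} {x : Fin 4}

theorem succ_eq_univ_or_singleton (hs : IsPerfectStrip s) (hj : s j = univ) :
    s (j + 1) = univ ∨ ∃ x ≠ 0, s (j + 1) = {x} := by
  by_cases h0 : 0 ∈ s (j + 1)
  · exact .inl (univ_subset_iff.1 (hj ▸ hs.subset_succ h0))
  · obtain ⟨x, hx⟩ := card_eq_one.1 (hs.card_eq_one_of_zero_notMem h0)
    exact .inr ⟨x, fun hx0 ↦ h0 (by simp [hx, hx0]), hx⟩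

theorem mem_succ_of_subset_pair (hs : IsPerfectStrip s) (hx : x ∈ s j)
    (hsub : s (j + 1) ⊆ {0, x}) : x ∈ s (j + 1) := by
  by_cases h0 : 0 ∈ s (j + 1)
  · exact hs.subset_succ h0 hx
  · obtain ⟨y, hy⟩ := card_eq_one.1 (hs.card_eq_one_of_zero_notMem h0)
    have hyx : y = 0 ∨ y = x := by simpa using hsub (hy ▸ mem_singleton_self y)
    grind

/-- The copies `j` and `j + 1` contain no strand other than `x`, and copy `j + 1` contains `x`. -/
def IsThinAt (s : ℕ → Finset (Fin 4)) (x : Fin 4) (j : ℕ) : Prop :=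
  x ≠ 0 ∧ s j ⊆ {0, x} ∧ s (j + 1) ⊆ {0, x} ∧ x ∈ s (j + 1)

theorem isThinAt_succ_of_univ (hs : IsPerfectStrip s) (hj : s j = univ) (hx0 : x ≠ 0)
    (hx : s (j + 1) = {x}) : IsThinAt s x (j + 1) := by
  have hsub : s (j + 2) ⊆ {0, x} := fun t ht ↦ by
    have := hs.mem_add_two_iff (j := j) (t := t)
    grind
  refine ⟨hx0, by simp [hx], hsub, hs.mem_succ_of_subset_pair (by simp [hx]) hsub⟩

theorem IsThinAt.succ (hs : IsPerfectStrip s) (hthin : IsThinAt s x j) (h0 : 0 ∈ s (j + 1)) :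
    IsThinAt s x (j + 1) := by
  obtain ⟨hx0, -, hsub, hx⟩ := hthin
  have hsub' : s (j + 2) ⊆ {0, x} := (hs.succ_subset h0).trans hsub
  exact ⟨hx0, hsub, hsub', hs.mem_succ_of_subset_pair hx hsub'⟩

theorem IsThinAt.add_two_eq_univ (hs : IsPerfectStrip s) (hthin : IsThinAt s x j)
    (h0 : 0 ∉ s (j + 1)) : s (j + 2) = univ := by
  obtain ⟨hx0, hsub, hsub', hx⟩ := hthin
  have hothers : univ \ {0, x} ⊆ s (j + 2) := fun t ht ↦ by
    have := hs.mem_add_two_iff (j := j) (t := t)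
    grind
  have hhub : 0 ∈ s (j + 2) := by
    by_contra h
    have hle := card_le_card hothers
    rw [card_univ_sdiff, card_pair hx0.symm, Fintype.card_fin,
      hs.card_eq_one_of_zero_notMem h] at hle
    lia
  have hxmem : x ∈ s (j + 2) := hs.subset_succ hhub hx
  grind

-- Copy `m` is full, or ends a thin stretch, or lies inside one; in the last case the surplus of the
-- preceding full copy is needed once more, for the copy of weight one that ends the stretch.
theorem univ_or_isThinAt_and_two_mul_le_sum_card (hs : IsPerfectStrip s) (h0 : s 0 = univ)
    (m : ℕ) :
    (s m = univ ∧ 2 * m ≤ ∑ l ∈ range m, #(s l)) ∨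
    (s (m + 1) = univ ∧ 2 * (m + 1) ≤ ∑ l ∈ range (m + 1), #(s l)) ∨
    ∃ x, IsThinAt s x m ∧ 2 * (m + 1) + 1 ≤ ∑ l ∈ range (m + 1), #(s l) := by
  induction m with
  | zero => simp [h0]
  | succ m ih =>
    rw [sum_range_succ _ (m + 1)]
    obtain ⟨hm, hsum⟩ | h | ⟨x, hthin, hsum⟩ := ih
    · have hcard : #(s m) = 4 := by simp [hm]
      rw [sum_range_succ]
      obtain hm' | ⟨x, hx0, hx⟩ := hs.succ_eq_univ_or_singleton hm
      · exact .inl ⟨hm', by lia⟩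
      · have hcard' : #(s (m + 1)) = 1 := by simp [hx]
        exact .inr (.inr ⟨x, hs.isThinAt_succ_of_univ hm hx0 hx, by lia⟩)
    · exact .inl h
    · by_cases hhub : 0 ∈ s (m + 1)
      · have hcard : 2 ≤ #(s (m + 1)) :=
          one_lt_card.2 ⟨0, hhub, x, hthin.2.2.2, hthin.1.symm⟩
        exact .inr (.inr ⟨x, hthin.succ hs hhub, by lia⟩)
      · have hcard := hs.card_eq_one_of_zero_notMem hhub
        exact .inr (.inl ⟨hthin.add_two_eq_univ hs hhub, by lia⟩)

theorem two_mul_le_sum_card (hs : IsPerfectStrip s) (h0 : s 0 = univ) (m : ℕ) :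
    2 * m ≤ ∑ l ∈ range m, #(s l) := by
  obtain _ | m := m
  · simp
  · obtain ⟨hm, hsum⟩ | ⟨-, hsum⟩ | ⟨-, -, hsum⟩ :=
      hs.univ_or_isThinAt_and_two_mul_le_sum_card h0 m
    · have hcard : #(s m) = 4 := by simp [hm]
      rw [sum_range_succ]
      lia
    · exact hsum
    · lia

end IsPerfectStrip

section Rotation

variable {n : ℕ}

/-- The rotation of `J_n` that carries each copy to the next one, exchanging the labels `c` and
`d` on the way from the last copy to the first. -/
def flowerRotation (n : ℕ) : Equiv.Perm (FV n) :=
  (finRotate n).prodShear fun i ↦ if (i : ℕ) = n - 1 then Equiv.swap 2 3 else 1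

theorem val_finRotate_pow (i : Fin n) (j : ℕ) : (((finRotate n) ^ j) i : ℕ) = (i + j) % n := by
  have := i.neZero
  induction j with
  | zero => simp [Nat.mod_eq_of_lt i.isLt]
  | succ j ih => simp [pow_succ', finRotate_apply, Fin.val_add, ih, add_assoc]

theorem flowerRotation_pow_fst (j : ℕ) (v : FV n) :
    ((flowerRotation n ^ j) v).1 = (finRotate n ^ j) v.1 := by
  induction j with
  | zero => rfl
  | succ j ih => rw [pow_succ', pow_succ', Equiv.Perm.mul_apply, Equiv.Perm.mul_apply, ← ih]; rfl

theorem flowerRotation_snd_eq_zero_iff {v : FV n} : (flowerRotation n v).2 = 0 ↔ v.2 = 0 := by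
  change (if (v.1 : ℕ) = n - 1 then Equiv.swap 2 3 else 1 : Equiv.Perm (Fin 4)) v.2 = 0 ↔ v.2 = 0
  split_ifs
  · generalize v.2 = t
    decide +revert
  · rfl

theorem flowerRotation_pow_snd_eq_zero_iff (j : ℕ) {v : FV n} :
    ((flowerRotation n ^ j) v).2 = 0 ↔ v.2 = 0 := by
  induction j with
  | zero => rfl
  | succ j ih => rw [pow_succ', Equiv.Perm.mul_apply, flowerRotation_snd_eq_zero_iff, ih]

theorem flowerRotation_pow_ne {j k : ℕ} (hjk : j < k) (hk : k < j + n) (i : Fin n) (t u : Fin 4) :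
    (flowerRotation n ^ j) (i, t) ≠ (flowerRotation n ^ k) (i, u) := fun h ↦ by
  have hmod : (i : ℕ) + j ≡ i + k [MOD n] := by
    have := congrArg (fun v : FV n ↦ (v.1 : ℕ)) h
    rwa [flowerRotation_pow_fst, flowerRotation_pow_fst, val_finRotate_pow,
      val_finRotate_pow] at this
  have hdvd := (Nat.modEq_iff_dvd' hjk.le).1 (Nat.ModEq.add_left_cancel' _ hmod)
  have := Nat.le_of_dvd (by lia) hdvd
  lia

theorem exists_eq_flowerRotation_pow_of_fst_eq {i : Fin n} {j : ℕ} {w : FV n}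
    (hw : w.1 = (finRotate n ^ j) i) : ∃ t, w = (flowerRotation n ^ j) (i, t) := by
  obtain ⟨⟨k, t⟩, rfl⟩ := (flowerRotation n ^ j).surjective w
  rw [flowerRotation_pow_fst] at hw
  obtain rfl : k = i := (finRotate n ^ j).injective hw
  exact ⟨t, rfl⟩

theorem flowerSnark_eq_fromRel_rotation (n : ℕ) :
    flowerSnark n = SimpleGraph.fromRel fun v w ↦
      (v.1 = w.1 ∧ v.2 = 0 ∧ w.2 ≠ 0) ∨ (v.2 ≠ 0 ∧ w = flowerRotation n v) := by
  unfold flowerSnark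
  congr
  ext ⟨i, t⟩ ⟨k, x⟩
  have hk := k.isLt
  have hi := i.isLt
  have hrotate : k = finRotate n i ↔ (k : ℕ) = (i + 1) % n := by
    rw [← pow_one (finRotate n), Fin.ext_iff, val_finRotate_pow]
  simp only [flowerRotation, Equiv.prodShear_apply, Prod.mk.injEq, hrotate]
  obtain hlast | hlast := eq_or_ne (i : ℕ) (n - 1)
  · have hmod : (n - 1 + 1) % n = 0 := by rw [Nat.sub_add_cancel (by lia), Nat.mod_self]
    simp only [hmod, hlast, if_true]
    fin_cases t <;> fin_cases x <;> simp [Equiv.swap_apply_def] <;> lia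
  · have hmod : ((i : ℕ) + 1) % n = i + 1 := Nat.mod_eq_of_lt (by lia)
    simp only [hmod, hlast, if_false, Equiv.Perm.one_apply]
    fin_cases t <;> fin_cases x <;> simp <;> lia

theorem flowerSnark_adj_hub_iff {i : Fin n} {w : FV n} :
    (flowerSnark n).Adj (i, 0) w ↔ w.1 = i ∧ w.2 ≠ 0 := by
  have hrot := flowerRotation_snd_eq_zero_iff (v := w)
  rw [flowerSnark_eq_fromRel_rotation, SimpleGraph.fromRel_adj]
  grind

theorem flowerSnark_adj_strand_iff (hn : 2 ≤ n) {v w : FV n} (hv : v.2 ≠ 0) :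
    (flowerSnark n).Adj v w ↔
      w = (v.1, 0) ∨ w = flowerRotation n v ∨ v = flowerRotation n w := by
  have hrotw := flowerRotation_snd_eq_zero_iff (v := w)
  have hne (u : FV n) : u ≠ flowerRotation n u :=
    flowerRotation_pow_ne zero_lt_one (by lia) u.1 u.2 u.2
  rw [flowerSnark_eq_fromRel_rotation, SimpleGraph.fromRel_adj]
  grind

theorem degree_flowerSnark_le [DecidableRel (flowerSnark n).Adj] (hn : 2 ≤ n) (v : FV n) :
    (flowerSnark n).degree v ≤ 3 := by
  rw [← SimpleGraph.card_neighborFinset_eq_degree]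
  obtain ⟨i, t⟩ := v
  obtain rfl | ht := eq_or_ne t 0
  · refine (card_le_card (t := {(i, 1), (i, 2), (i, 3)}) fun w hw ↦ ?_).trans card_le_three
    rw [SimpleGraph.mem_neighborFinset, flowerSnark_adj_hub_iff] at hw
    obtain ⟨k, u⟩ := w
    fin_cases u <;> simp_all
  · refine (card_le_card (t := {(i, 0), flowerRotation n (i, t),
      (flowerRotation n).symm (i, t)}) fun w hw ↦ ?_).trans card_le_three
    rw [SimpleGraph.mem_neighborFinset, flowerSnark_adj_strand_iff hn ht] at hw
    simpa [Equiv.eq_symm_apply, eq_comm] using hw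

theorem flowerSnark_adj_rotation_pow_hub_iff {i : Fin n} {j : ℕ} {w : FV n} :
    (flowerSnark n).Adj ((flowerRotation n ^ j) (i, 0)) w ↔
      ∃ t ≠ 0, w = (flowerRotation n ^ j) (i, t) := by
  have hhub : (flowerRotation n ^ j) (i, 0) = ((finRotate n ^ j) i, 0) :=
    Prod.ext (flowerRotation_pow_fst _ _) ((flowerRotation_pow_snd_eq_zero_iff j).2 rfl)
  rw [hhub, flowerSnark_adj_hub_iff]
  constructor
  · rintro ⟨hw, hw0⟩
    obtain ⟨t, rfl⟩ := exists_eq_flowerRotation_pow_of_fst_eq hw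
    exact ⟨t, (flowerRotation_pow_snd_eq_zero_iff j).not.1 hw0, rfl⟩
  · rintro ⟨t, ht, rfl⟩
    exact ⟨flowerRotation_pow_fst _ _, (flowerRotation_pow_snd_eq_zero_iff j).not.2 ht⟩

theorem flowerSnark_adj_rotation_pow_succ_iff (hn : 2 ≤ n) {i : Fin n} {j : ℕ} {t : Fin 4}
    (ht : t ≠ 0) {w : FV n} :
    (flowerSnark n).Adj ((flowerRotation n ^ (j + 1)) (i, t)) w ↔
      w = (flowerRotation n ^ (j + 1)) (i, 0) ∨ w = (flowerRotation n ^ (j + 2)) (i, t) ∨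
        w = (flowerRotation n ^ j) (i, t) := by
  have hhub : (((flowerRotation n ^ (j + 1)) (i, t)).1, 0) = (flowerRotation n ^ (j + 1)) (i, 0) :=
    Prod.ext (by rw [flowerRotation_pow_fst, flowerRotation_pow_fst])
      ((flowerRotation_pow_snd_eq_zero_iff _).2 rfl).symm
  have hnext : flowerRotation n ((flowerRotation n ^ (j + 1)) (i, t))
      = (flowerRotation n ^ (j + 2)) (i, t) := by
    rw [pow_succ' _ (j + 1), Equiv.Perm.mul_apply]
  have hprev : (flowerRotation n ^ (j + 1)) (i, t) = flowerRotation n w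
      ↔ w = (flowerRotation n ^ j) (i, t) := by
    rw [pow_succ', Equiv.Perm.mul_apply, (flowerRotation n).injective.eq_iff, eq_comm]
  rw [flowerSnark_adj_strand_iff hn ((flowerRotation_pow_snd_eq_zero_iff _).not.2 ht), hhub, hnext,
    hprev]

end Rotation

section Strip

variable {n : ℕ} {S : Set (FV n)}

open Classical in
/-- The labels of the vertices of `S` in the copy that lies `j` rotations after copy `i`; they are
transported along the rotation, so that a strand keeps its label from one copy to the next. -/
noncomputable def copyStrip (S : Set (FV n)) (i : Fin n) (j : ℕ) : Finset (Fin 4) :=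
  {t | (flowerRotation n ^ j) (i, t) ∈ S}

theorem mem_copyStrip {i : Fin n} {j : ℕ} {t : Fin 4} :
    t ∈ copyStrip S i j ↔ (flowerRotation n ^ j) (i, t) ∈ S := by
  simp [copyStrip]

namespace IsPerfectDominating

variable {i : Fin n} {j : ℕ} {t : Fin 4}

theorem card_copyStrip_eq_one (hS : IsPerfectDominating (flowerSnark n) S)
    (h : 0 ∉ copyStrip S i j) : #(copyStrip S i j) = 1 := by
  obtain ⟨w, ⟨hw, hadj⟩, hunique⟩ := hS _ (mem_copyStrip.not.1 h)
  obtain ⟨t, -, rfl⟩ := flowerSnark_adj_rotation_pow_hub_iff.1 hadj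
  refine card_eq_one_iff_existsUnique.2 ⟨t, mem_copyStrip.2 hw, fun u hu ↦ ?_⟩
  have hu0 : u ≠ 0 := fun hu0 ↦ h (hu0 ▸ hu)
  simpa using hunique _ ⟨mem_copyStrip.1 hu, flowerSnark_adj_rotation_pow_hub_iff.2 ⟨u, hu0, rfl⟩⟩

theorem copyStrip_subset_succ (hS : IsPerfectDominating (flowerSnark n) S) (hn : 2 ≤ n)
    (h : 0 ∈ copyStrip S i (j + 1)) : copyStrip S i j ⊆ copyStrip S i (j + 1) := fun t ht ↦ by
  by_contra htS
  have ht0 : t ≠ 0 := fun ht0 ↦ htS (ht0 ▸ h)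
  have hadj {w} := flowerSnark_adj_rotation_pow_succ_iff (w := w) (i := i) (j := j) hn ht0
  exact flowerRotation_pow_ne (by lia) (by lia) i t 0
    ((hS _ (mem_copyStrip.not.1 htS)).unique ⟨mem_copyStrip.1 ht, hadj.2 (by simp)⟩
      ⟨mem_copyStrip.1 h, hadj.2 (by simp)⟩)

theorem copyStrip_succ_subset (hS : IsPerfectDominating (flowerSnark n) S) (hn : 2 ≤ n)
    (h : 0 ∈ copyStrip S i j) : copyStrip S i (j + 1) ⊆ copyStrip S i j := fun t ht ↦ by
  by_contra htS
  have ht0 : t ≠ 0 := fun ht0 ↦ htS (ht0 ▸ h)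
  have hhub := (flowerSnark_adj_rotation_pow_hub_iff (i := i) (j := j)).2 ⟨t, ht0, rfl⟩
  have hnext := (flowerSnark_adj_rotation_pow_succ_iff (i := i) (j := j) hn ht0).2
    (.inr (.inr rfl))
  exact flowerRotation_pow_ne (by lia) (by lia) i 0 t
    ((hS _ (mem_copyStrip.not.1 htS)).unique ⟨mem_copyStrip.1 h, hhub.symm⟩
      ⟨mem_copyStrip.1 ht, hnext.symm⟩)

theorem mem_copyStrip_add_two_iff (hS : IsPerfectDominating (flowerSnark n) S) (hn : 3 ≤ n)
    (h : 0 ∉ copyStrip S i (j + 1)) (ht0 : t ≠ 0) (htS : t ∉ copyStrip S i (j + 1)) :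
    t ∈ copyStrip S i (j + 2) ↔ t ∉ copyStrip S i j := by
  have hadj {w} := flowerSnark_adj_rotation_pow_succ_iff (w := w) (i := i) (j := j) (by lia) ht0
  have hdominated := hS _ (mem_copyStrip.not.1 htS)
  have hne := flowerRotation_pow_ne (show j < j + 2 by lia) (by lia) i t t
  simp only [mem_copyStrip] at h ⊢
  constructor
  · intro hnext hprev
    exact hne (hdominated.unique ⟨hprev, hadj.2 (by simp)⟩ ⟨hnext, hadj.2 (by simp)⟩)
  · intro hprev
    obtain ⟨w, hw, hadjw⟩ := hdominated.exists
    obtain rfl | rfl | rfl := hadj.1 hadjw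
    exacts [absurd hw h, hw, absurd hw hprev]

theorem isPerfectStrip_copyStrip (hS : IsPerfectDominating (flowerSnark n) S) (hn : 3 ≤ n)
    (i : Fin n) : IsPerfectStrip (copyStrip S i) where
  card_eq_one_of_zero_notMem := hS.card_copyStrip_eq_one
  subset_succ := hS.copyStrip_subset_succ (by lia)
  succ_subset := hS.copyStrip_succ_subset (by lia)
  mem_add_two_iff := hS.mem_copyStrip_add_two_iff hn

end IsPerfectDominating

theorem card_copyStrip (S : Set (FV n)) (i : Fin n) (j : ℕ) :
    #(copyStrip S i j) = copyWeight S (i + j) := by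
  have himage : S ∩ {v : FV n | (v.1 : ℕ) = (i + j) % n}
      = (fun t ↦ (flowerRotation n ^ j) (i, t)) '' copyStrip S i j := by
    ext v
    simp only [← val_finRotate_pow, ← Fin.ext_iff, Set.mem_inter_iff, Set.mem_ofPred_eq,
      Set.mem_image, mem_coe, mem_copyStrip]
    constructor
    · rintro ⟨hv, hfst⟩
      obtain ⟨t, rfl⟩ := exists_eq_flowerRotation_pow_of_fst_eq hfst
      exact ⟨t, hv, rfl⟩
    · rintro ⟨t, ht, rfl⟩
      exact ⟨ht, flowerRotation_pow_fst _ _⟩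
  have hinj : Function.Injective fun t ↦ (flowerRotation n ^ j) (i, t) :=
    (flowerRotation n ^ j).injective.comp (Prod.mk_right_injective i)
  rw [copyWeight, himage, Set.ncard_image_of_injective _ hinj, Set.ncard_coe_finset]

theorem sum_copyWeight (S : Set (FV n)) : ∑ i : Fin n, copyWeight S i = S.ncard := by
  classical
  rw [Set.ncard_eq_toFinset_card', card_eq_sum_card_fiberwise (f := Prod.fst) (t := univ) (by simp)]
  refine sum_congr rfl fun i _ ↦ ?_
  rw [copyWeight, Nat.mod_eq_of_lt i.isLt, Set.ncard_eq_toFinset_card']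
  congr 1
  ext v
  simp [Fin.ext_iff]

theorem sum_card_copyStrip (S : Set (FV n)) (i : Fin n) :
    ∑ j ∈ range n, #(copyStrip S i j) = S.ncard := by
  have := i.neZero
  calc ∑ j ∈ range n, #(copyStrip S i j)
    _ = ∑ j : Fin n, copyWeight S (i + j : ℕ) := by
      simp only [card_copyStrip, Fin.sum_univ_eq_sum_range fun j ↦ copyWeight S (i + j)]
    _ = ∑ j : Fin n, copyWeight S (i + j : Fin n) := by
      simp only [copyWeight, Fin.val_add, Nat.mod_mod]
    _ = S.ncard := by
      rw [← sum_copyWeight]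
      exact Equiv.sum_comp (Equiv.addLeft i) fun j : Fin n ↦ copyWeight S j

end Strip

theorem ConnectedDominating.isPerfectDominating {n : ℕ} (hn : 2 ≤ n) {S : Set (FV n)}
    (hS : ConnectedDominating n S) (hcard : S.ncard < 2 * n) :
    IsPerfectDominating (flowerSnark n) S := by
  classical
  obtain ⟨T, rfl⟩ := S.toFinite.exists_finset_coe
  obtain ⟨hdom, hconn⟩ := hS
  refine isPerfectDominating_of_connected (d := 3) (fun v _ ↦ degree_flowerSnark_le hn v)
    hconn hdom ?_
  rw [Set.ncard_coe_finset] at hcard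
  rw [Fintype.card_prod, Fintype.card_fin, Fintype.card_fin]
  lia

theorem flowerSnark_connectedDominating_even_weight4_general {n : ℕ} (hn : 3 ≤ n)
    {S : Set (FV n)} (hS : ConnectedDominating n S) (hcard : S.ncard < 2 * n) (i : Fin n) :
    copyWeight S i ≠ 4 := fun hweight ↦ by
  have hstrip : IsPerfectStrip (copyStrip S i) :=
    (hS.isPerfectDominating (by lia) hcard).isPerfectStrip_copyStrip hn i
  have hfull : copyStrip S i 0 = univ := by
    rw [← card_eq_iff_eq_univ, card_copyStrip, add_zero, hweight, Fintype.card_fin]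
  have hlarge : 2 * n ≤ S.ncard :=
    sum_card_copyStrip S i ▸ hstrip.two_mul_le_sum_card hfull n
  lia

/-- Suppose `n ≥ 5` is odd and the connected domination number of the flower
snark `J_{n-1}` equals `2n - 2`. If `S` is a connected dominating set of `J_n`
with `|S| = 2n - 1`, then the number of copies having weight 4 in `S` is
even. -/
theorem flowerSnark_connectedDominating_even_weight4 (n : ℕ) (hn : 5 ≤ n)
    (hodd : Odd n) (hprev : connectedDominationNumber (n - 1) = 2 * n - 2)
    (S : Set (FV n)) (hS : ConnectedDominating n S)
    (hcard : S.ncard = 2 * n - 1) :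
    Even {i : Fin n | copyWeight S (i : ℕ) = 4}.ncard := by
  have hfull := flowerSnark_connectedDominating_even_weight4_general (n := n) (by lia) hS (by lia)
  simp [hfull]
end

section
/- Let n ≥ 3 and let S be a connected dominating set of the flower snark J_n. Then there is no index i such that the copies J^i, J^{i+1}, J^{i+2} have weights 1, 1, 1 in S, and there is no index i such that the copies J^i, J^{i+1}, …, J^{i+6} have weights 1, 3, 1, 2, 1, 3, 1 in S (all indices mod n). -/
/-!
A connected dominating set `S` with at least two vertices is totally dominating, so every copy
contains a leaf `b`, `c` or `d` in `S` (dominating its `a`), and a copy without `a` has all three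
of its leaves dominated from the two neighbouring copies, whose weights then add up to at least
`3`. A copy of weight `1` consists of a leaf, so it cannot lie between two copies of weight `1`.

In the pattern 1312131, the copies of weight `3` and `2` lie between copies of weight `1` and hence
contain `a`. Let `z` be the leaf in the middle copy. The other two leaves of its neighbours, which
do not contain `a`, must be dominated from the copies of weight `3`; these therefore consist of `a`
and the two leaves off the row of `z`. So the middle copy, with at most the `z`-leaves of its
neighbours, is a connected component of `S` that misses the copies of weight `3`.
-/

theorem subset_of_preconnected_induce {V : Type*} {G : SimpleGraph V} {S T : Set V}
    (hG : (G.induce S).Preconnected) (hST : (S ∩ T).Nonempty)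
    (hT : ∀ v ∈ S ∩ T, ∀ w ∈ S, G.Adj v w → w ∈ T) : S ⊆ T := by
  obtain ⟨v, hvS, hvT⟩ := hST
  intro w hw
  by_contra hwT
  obtain ⟨p⟩ := hG ⟨v, hvS⟩ ⟨w, hw⟩
  obtain ⟨d, -, hd, hd'⟩ := p.exists_boundary_dart (Subtype.val ⁻¹' T) hvT hwT
  exact hd' (hT d.fst ⟨d.fst.2, hd⟩ d.snd d.snd.2 d.adj)

theorem exists_eq_pair_of_ncard_eq_two {α : Type*} {s : Set α} {a : α} (hs : s.ncard = 2)
    (ha : a ∈ s) : ∃ b ≠ a, s = {a, b} := by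
  obtain ⟨x, y, hxy, rfl⟩ := Set.ncard_eq_two.1 hs
  obtain rfl | rfl := ha
  · exact ⟨y, hxy.symm, rfl⟩
  · exact ⟨x, hxy, Set.pair_comm x a⟩

theorem notMem_of_compl_singleton_subset_union_pair {α : Type*} {s : Set α} {a b : α}
    (hs : s ≠ Set.univ) (ha : a ∈ s) (h : {a}ᶜ ⊆ s ∪ {a, b}) : b ∉ s := by
  intro hb
  refine hs (Set.eq_univ_of_forall fun x => ?_)
  by_cases hx : x = a
  · exact hx ▸ ha
  · obtain hxs | hxa | rfl := h hx
    exacts [hxs, absurd hxa hx, hb]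

namespace flowerSnark

/-- The automorphism of `J_n` of order `2n` that moves every copy to the next one, exchanging `c`
and `d` when it crosses the twist edges. Every edge not at an `a`-vertex joins some `v` to
`shift n v`. -/
def shift (n : ℕ) [NeZero n] : Equiv.Perm (FV n) :=
  (Equiv.addRight 1).prodShear fun i => if i.val + 1 = n then Equiv.swap 2 3 else 1

/-- The strip with untwisted rows `ℕ × {j}` that covers `J_n`: `cover n m j` is the vertex of
`J^(m mod n)` reached from vertex `j` of `J^0` along its row. Reading copies through `cover`
removes the twist, as adjacent copies are then always joined row by row. -/
def cover (n : ℕ) [NeZero n] (m : ℕ) (j : Fin 4) : FV n := (shift n ^ m) (0, j)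

/-- The part of `S` in the copy `J^(m mod n)`, as a set of row labels: `0` is the vertex `a`, and
the other three are the leaves `b, c, d` in the labelling of `cover`. -/
def trace {n : ℕ} [NeZero n] (S : Set (FV n)) (m : ℕ) : Set (Fin 4) := cover n m ⁻¹' S

section Cover

variable {n : ℕ} [NeZero n]

theorem shift_mk_of_add_one_lt {i : Fin n} (hi : i.val + 1 < n) (j : Fin 4) :
    shift n (i, j) = (⟨i + 1, hi⟩, j) := by
  simp [shift, Fin.ext_iff, Fin.val_add, hi.ne, Nat.mod_eq_of_lt hi]

theorem shift_mk_of_add_one_eq {i : Fin n} (hi : i.val + 1 = n) (j : Fin 4) :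
    shift n (i, j) = (⟨0, NeZero.pos n⟩, Equiv.swap 2 3 j) := by
  simp [shift, Fin.ext_iff, Fin.val_add, hi]

theorem eq_fromRel_shift : flowerSnark n = SimpleGraph.fromRel fun v w =>
    (v.1 = w.1 ∧ v.2 = 0 ∧ w.2 ≠ 0) ∨ (v.2 ≠ 0 ∧ w = shift n v) := by
  unfold flowerSnark
  congr! 3 with ⟨i, j⟩ ⟨i', j'⟩
  refine or_congr Iff.rfl ?_
  obtain hi | hi : i.val + 1 < n ∨ i.val + 1 = n := by omega
  · simp only [shift_mk_of_add_one_lt hi, Nat.mod_eq_of_lt hi, Prod.ext_iff, Fin.ext_iff]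
    omega
  · have hi' : i'.val ≠ n := i'.isLt.ne
    have hswap : j ≠ 0 ∧ j' = Equiv.swap 2 3 j ↔
        j = 1 ∧ j' = 1 ∨ j = 2 ∧ j' = 3 ∨ j = 3 ∧ j' = 2 := by
      decide +revert
    simp only [shift_mk_of_add_one_eq hi, hi, Nat.mod_self, Prod.ext_iff, Fin.ext_iff (n := n)]
    grind

theorem shift_snd_eq_zero_iff (v : FV n) : (shift n v).2 = 0 ↔ v.2 = 0 := by
  obtain hv | hv : v.1.val + 1 < n ∨ v.1.val + 1 = n := by omega
  · rw [shift_mk_of_add_one_lt hv]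
  · rw [shift_mk_of_add_one_eq hv, Equiv.swap_apply_eq_iff, Equiv.swap_apply_of_ne_of_ne] <;> decide

theorem val_fst_shift (v : FV n) : (shift n v).1.val = (v.1.val + 1) % n := by
  simp [shift, Fin.val_add]

theorem val_fst_shift_pow (m : ℕ) (v : FV n) : ((shift n ^ m) v).1.val = (v.1.val + m) % n := by
  induction m with
  | zero => simp [Nat.mod_eq_of_lt]
  | succ m ih => simp [pow_succ', val_fst_shift, ih, add_assoc]

theorem val_fst_cover (m : ℕ) (j : Fin 4) : (cover n m j).1.val = m % n := by
  simp [cover, val_fst_shift_pow]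

theorem cover_succ (m : ℕ) (j : Fin 4) : cover n (m + 1) j = shift n (cover n m j) := by
  rw [cover, pow_succ', Equiv.Perm.mul_apply, cover]

theorem cover_snd_eq_zero_iff (m : ℕ) (j : Fin 4) : (cover n m j).2 = 0 ↔ j = 0 := by
  induction m with
  | zero => rfl
  | succ m ih => rw [cover_succ, shift_snd_eq_zero_iff, ih]

theorem cover_injective (m : ℕ) : Function.Injective (cover n m) :=
  (shift n ^ m).injective.comp (Prod.mk_right_injective 0)

theorem range_cover (m : ℕ) : Set.range (cover n m) = {v | v.1.val = m % n} := by
  ext v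
  constructor
  · rintro ⟨j, rfl⟩
    exact val_fst_cover m j
  · intro hv
    obtain ⟨⟨i, j⟩, rfl⟩ := (shift n ^ m).surjective v
    rw [Set.mem_ofPred_eq, val_fst_shift_pow] at hv
    have hi : i.val ≡ 0 [MOD n] :=
      Nat.ModEq.add_right_cancel' m (by rw [Nat.ModEq, zero_add, hv])
    have hi0 : i = 0 := Fin.ext (by simpa [Nat.ModEq, Nat.mod_eq_of_lt] using hi)
    exact ⟨j, by rw [cover, hi0]⟩

theorem exists_cover_eq_of_fst_eq {m : ℕ} {j : Fin 4} {w : FV n} (hw : (cover n m j).1 = w.1) :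
    ∃ l, cover n m l = w := by
  change w ∈ Set.range (cover n m)
  rw [range_cover, Set.mem_ofPred_eq, ← hw, val_fst_cover]

theorem exists_eq_cover_of_adj_cover_zero {m : ℕ} {w : FV n}
    (h : (flowerSnark n).Adj (cover n m 0) w) : ∃ j ≠ 0, w = cover n m j := by
  have h0 : (cover n m 0).2 = 0 := (cover_snd_eq_zero_iff m 0).2 rfl
  rw [eq_fromRel_shift, SimpleGraph.fromRel_adj] at h
  obtain ⟨-, (⟨hfst, -, hw⟩ | ⟨h0', -⟩) | (⟨-, -, h0'⟩ | ⟨hw, hshift⟩)⟩ := h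
  · obtain ⟨j, rfl⟩ := exists_cover_eq_of_fst_eq hfst
    exact ⟨j, (cover_snd_eq_zero_iff m j).not.1 hw, rfl⟩
  · exact absurd h0 h0'
  · exact absurd h0 h0'
  · exact absurd ((shift_snd_eq_zero_iff w).1 (hshift ▸ h0)) hw

theorem eq_cover_of_adj_cover_succ {m : ℕ} {j : Fin 4} {w : FV n} (hj : j ≠ 0)
    (h : (flowerSnark n).Adj (cover n (m + 1) j) w) :
    w = cover n (m + 1) 0 ∨ w = cover n m j ∨ w = cover n (m + 2) j := by
  have hj' : (cover n (m + 1) j).2 ≠ 0 := (cover_snd_eq_zero_iff _ j).not.2 hj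
  rw [eq_fromRel_shift, SimpleGraph.fromRel_adj] at h
  obtain ⟨-, (⟨-, h0, -⟩ | ⟨-, hw⟩) | (⟨hfst, hw, -⟩ | ⟨-, hw⟩)⟩ := h
  · exact absurd h0 hj'
  · exact Or.inr (Or.inr (hw.trans (cover_succ (m + 1) j).symm))
  · obtain ⟨l, rfl⟩ := exists_cover_eq_of_fst_eq hfst.symm
    rw [(cover_snd_eq_zero_iff _ l).1 hw]
    exact Or.inl rfl
  · rw [cover_succ, (shift n).apply_eq_iff_eq] at hw
    exact Or.inr (Or.inl hw.symm)

end Cover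

section Trace

variable {n : ℕ} [NeZero n] {S : Set (FV n)} {m : ℕ}

theorem ncard_trace (S : Set (FV n)) (m : ℕ) : (trace S m).ncard = copyWeight S m := by
  have h : trace S m = cover n m ⁻¹' (S ∩ {v | v.1.val = m % n}) := by
    rw [← range_cover, Set.preimage_inter, Set.preimage_range, Set.inter_univ, trace]
  rw [h, Set.ncard_preimage_of_injective_subset_range (cover_injective m)
    (Set.inter_subset_right.trans (range_cover m).superset), copyWeight]

theorem copyWeight_eq_of_cover_eq {m' : ℕ} {j j' : Fin 4} (h : cover n m j = cover n m' j') :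
    copyWeight S m = copyWeight S m' := by
  have hmod : m % n = m' % n := by rw [← val_fst_cover m j, h, val_fst_cover]
  rw [copyWeight, copyWeight, hmod]

theorem subset_of_trace_eq_pair {z : Fin 4} (hS : ((flowerSnark n).induce S).Preconnected)
    (hz : z ≠ 0) (h0 : z ∉ trace S m) (h1 : 0 ∉ trace S (m + 1)) (h2 : trace S (m + 2) = {0, z})
    (h3 : 0 ∉ trace S (m + 3)) (h4 : z ∉ trace S (m + 4)) :
    S ⊆ {cover n (m + 1) z, cover n (m + 2) 0, cover n (m + 2) z, cover n (m + 3) z} := by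
  have hmid : cover n (m + 2) 0 ∈ S := show 0 ∈ trace S (m + 2) by
    simp [h2]
  refine subset_of_preconnected_induce hS ⟨cover n (m + 2) 0, hmid, by simp⟩ ?_
  rintro v ⟨-, rfl | rfl | rfl | rfl⟩ w hw hadj
  · obtain rfl | rfl | rfl := eq_cover_of_adj_cover_succ hz hadj
    · exact absurd hw h1
    · exact absurd hw h0
    · simp
  · obtain ⟨j, hj, rfl⟩ := exists_eq_cover_of_adj_cover_zero hadj
    have hj' : j ∈ ({0, z} : Set (Fin 4)) := h2 ▸ hw
    obtain rfl : j = z := hj'.resolve_left hj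
    simp
  · obtain rfl | rfl | rfl := eq_cover_of_adj_cover_succ hz hadj <;> simp
  · obtain rfl | rfl | rfl := eq_cover_of_adj_cover_succ hz hadj
    · exact absurd hw h3
    · simp
    · exact absurd hw h4

end Trace

end flowerSnark

section Patterns

open flowerSnark

variable {n : ℕ} [NeZero n] {S : Set (FV n)} {m : ℕ}

theorem Dominating.exists_mem_trace (hS : Dominating n S) (m : ℕ) : ∃ j, j ∈ trace S m := by
  by_cases h0 : cover n m 0 ∈ S
  · exact ⟨0, h0⟩
  · obtain ⟨w, hw, hadj⟩ := hS _ h0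
    obtain ⟨j, -, rfl⟩ := exists_eq_cover_of_adj_cover_zero hadj
    exact ⟨j, hw⟩

theorem Dominating.nontrivial (hn : n ≠ 1) (hS : Dominating n S) : S.Nontrivial := by
  obtain ⟨j, hj⟩ := hS.exists_mem_trace 0
  obtain ⟨l, hl⟩ := hS.exists_mem_trace 1
  refine ⟨cover n 0 j, hj, cover n 1 l, hl, fun h => hn ?_⟩
  have hmod : 0 % n = 1 % n := by rw [← val_fst_cover 0 j, h, val_fst_cover]
  exact Nat.dvd_one.1 (Nat.modEq_zero_iff_dvd.1 hmod.symm)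

theorem ConnectedDominating.totalDominating (hn : n ≠ 1) (hS : ConnectedDominating n S) :
    TotalDominating n S := by
  intro v
  by_cases hv : v ∈ S
  · have := (hS.1.nontrivial hn).coe_sort
    obtain ⟨w, hw⟩ := hS.2.preconnected.exists_adj_of_nontrivial ⟨v, hv⟩
    exact ⟨w, w.2, hw⟩
  · exact hS.1 v hv

theorem TotalDominating.exists_ne_zero_mem_trace (hS : TotalDominating n S) (m : ℕ) :
    ∃ j ≠ 0, j ∈ trace S m := by
  obtain ⟨w, hw, hadj⟩ := hS (cover n m 0)
  obtain ⟨j, hj, rfl⟩ := exists_eq_cover_of_adj_cover_zero hadj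
  exact ⟨j, hj, hw⟩

theorem TotalDominating.compl_zero_subset_trace_union (hS : TotalDominating n S)
    (h0 : 0 ∉ trace S (m + 1)) : {0}ᶜ ⊆ trace S m ∪ trace S (m + 2) := by
  intro j hj
  obtain ⟨w, hw, hadj⟩ := hS (cover n (m + 1) j)
  obtain rfl | rfl | rfl := eq_cover_of_adj_cover_succ hj hadj
  · exact absurd hw h0
  · exact Or.inl hw
  · exact Or.inr hw

theorem TotalDominating.three_le_copyWeight_add (hS : TotalDominating n S)
    (h0 : 0 ∉ trace S (m + 1)) : 3 ≤ copyWeight S m + copyWeight S (m + 2) :=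
  calc 3 = ({0}ᶜ : Set (Fin 4)).ncard :=
      (Set.ncard_compl_of_ncard_eq_add _ (by simp)).symm
    _ ≤ (trace S m ∪ trace S (m + 2)).ncard :=
      Set.ncard_le_ncard (hS.compl_zero_subset_trace_union h0)
    _ ≤ (trace S m).ncard + (trace S (m + 2)).ncard := Set.ncard_union_le _ _
    _ = copyWeight S m + copyWeight S (m + 2) := by rw [ncard_trace, ncard_trace]

theorem TotalDominating.zero_mem_trace (hS : TotalDominating n S)
    (h : copyWeight S m + copyWeight S (m + 2) < 3) : 0 ∈ trace S (m + 1) := by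
  by_contra h0
  exact h.not_ge (hS.three_le_copyWeight_add h0)

theorem TotalDominating.zero_notMem_trace (hS : TotalDominating n S)
    (h : copyWeight S m = 1) : 0 ∉ trace S m := by
  rw [← ncard_trace, Set.ncard_eq_one] at h
  obtain ⟨x, hx⟩ := h
  obtain ⟨j, hj, hjm⟩ := hS.exists_ne_zero_mem_trace m
  rw [hx, Set.mem_singleton_iff] at hjm ⊢
  exact fun h0 => hj (hjm.trans h0.symm)

theorem TotalDominating.not_copyWeight_pattern_111 (hS : TotalDominating n S) (m : ℕ) :
    ¬ (copyWeight S m = 1 ∧ copyWeight S (m + 1) = 1 ∧ copyWeight S (m + 2) = 1) := by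
  rintro ⟨w0, w1, w2⟩
  have := hS.three_le_copyWeight_add (hS.zero_notMem_trace w1)
  omega

theorem TotalDominating.not_copyWeight_pattern_1312131 (hS : TotalDominating n S)
    (hconn : ((flowerSnark n).induce S).Preconnected) (m : ℕ) :
    ¬ (copyWeight S m = 1 ∧ copyWeight S (m + 1) = 3 ∧ copyWeight S (m + 2) = 1 ∧
      copyWeight S (m + 3) = 2 ∧ copyWeight S (m + 4) = 1 ∧ copyWeight S (m + 5) = 3 ∧
      copyWeight S (m + 6) = 1) := by
  rintro ⟨w0, w1, w2, w3, w4, w5, w6⟩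
  have ne_univ {k : ℕ} (hk : copyWeight S k = 3) : trace S k ≠ Set.univ := fun h => by
    simp [← ncard_trace, h] at hk
  have a1 : 0 ∈ trace S (m + 1) := hS.zero_mem_trace (by omega)
  have a2 : 0 ∉ trace S (m + 2) := hS.zero_notMem_trace w2
  have a3 : 0 ∈ trace S (m + 2 + 1) := hS.zero_mem_trace (by simp [add_assoc, w2, w4])
  have a4 : 0 ∉ trace S (m + 4) := hS.zero_notMem_trace w4
  have a5 : 0 ∈ trace S (m + 4 + 1) := hS.zero_mem_trace (by simp [add_assoc, w4, w6])
  obtain ⟨z, hz, h3⟩ := exists_eq_pair_of_ncard_eq_two ((ncard_trace S _).trans w3) a3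
  have leaves2 : {0}ᶜ ⊆ trace S (m + 1) ∪ {0, z} := h3 ▸ hS.compl_zero_subset_trace_union a2
  have leaves4 : {0}ᶜ ⊆ trace S (m + 5) ∪ {0, z} :=
    h3 ▸ Set.union_comm _ _ ▸ hS.compl_zero_subset_trace_union a4
  have z1 : z ∉ trace S (m + 1) :=
    notMem_of_compl_singleton_subset_union_pair (ne_univ w1) a1 leaves2
  have z5 : z ∉ trace S (m + 5) :=
    notMem_of_compl_singleton_subset_union_pair (ne_univ w5) a5 leaves4
  obtain h | h | h | h := subset_of_trace_eq_pair hconn hz z1 a2 h3 a4 z5 a1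
  all_goals
    have := copyWeight_eq_of_cover_eq (S := S) h
    simp [add_assoc, w1, w2, w3, w4] at this

end Patterns

/-- If `n ≥ 3` and `S` is a connected dominating set of the flower snark `J_n`,
then `S` contains neither the pattern 111 nor the pattern 1312131 of weights on
consecutive copies (indices mod `n`). -/
theorem flowerSnark_connectedDominating_patterns (n : ℕ) (hn : 3 ≤ n)
    (S : Set (FV n)) (hS : ConnectedDominating n S) :
    (¬ ∃ i : Fin n, copyWeight S (i : ℕ) = 1 ∧ copyWeight S ((i : ℕ) + 1) = 1 ∧
        copyWeight S ((i : ℕ) + 2) = 1) ∧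
    (¬ ∃ i : Fin n, copyWeight S (i : ℕ) = 1 ∧ copyWeight S ((i : ℕ) + 1) = 3 ∧
        copyWeight S ((i : ℕ) + 2) = 1 ∧ copyWeight S ((i : ℕ) + 3) = 2 ∧
        copyWeight S ((i : ℕ) + 4) = 1 ∧ copyWeight S ((i : ℕ) + 5) = 3 ∧
        copyWeight S ((i : ℕ) + 6) = 1) := by
  have : NeZero n := ⟨by omega⟩
  have hT : TotalDominating n S := hS.totalDominating (by omega)
  exact ⟨fun ⟨i, h⟩ => hT.not_copyWeight_pattern_111 i h,
    fun ⟨i, h⟩ => hT.not_copyWeight_pattern_1312131 hS.2.preconnected i h⟩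
end

section
/- Let n ≥ 3 and let f be a weak Roman dominating function on the flower snark J_n. Then there is no index i such that the copies J^i, J^{i+1}, J^{i+2} have weights 1, 1, 1 in f; there is no index i such that the copies J^i, J^{i+1}, J^{i+2}, J^{i+3} have weights 1, 1, 2, 1 (or, read in reverse, 1, 2, 1, 1) in f; and there is no index i such that the copies J^i, …, J^{i+6} have weights 1, 2, 1, 2, 1, 2, 1 in f (all indices mod n). -/
/-!
The copies of `J_n` form a cyclic chain of claws, followed through the twist along three tracks of
leaves. The only guard of a claw of weight 1 cannot leave it from a leaf, since the hub would become
undefended. Hence a claw of weight at most 2 between two claws of weight 1 has a guarded hub, and a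
claw after two claws of weight 1 carries at least two guards on its leaves; this excludes 111 and
1121, and 1211 by reversal.

In 1212121 the three claws of weight 2 thus have a guarded hub and at most one leaf guard each. Each
of the two inner claws of weight 1 is rescued from both sides on different tracks, and the leaf
guard of the central claw takes part in both rescues. As it moves to one side it must not be missed
on the other, so both inner claws of weight 1 have their guard on the hub. Then no leaf of the
central claw is covered from outside, and its hub guard cannot go to one leaf without abandoning
another.
-/

/-- A guard of `f` at `w` can answer an attack on the unguarded neighbour `v`: once it has moved,
every vertex out of reach of `v` still has, on itself or on a neighbour, a guard that stayed. -/
structure Protects {V : Type*} (G : SimpleGraph V) (f : V → ℕ) (w v : V) : Prop where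
  eq_zero : f v = 0
  adj : G.Adj v w
  one_le : 1 ≤ f w
  exists_guard (u : V) (hne : u ≠ v) (hadj : ¬ G.Adj u v) :
    ∃ x, (x = u ∨ G.Adj u x) ∧ 1 ≤ f x ∧ (x = w → 2 ≤ f x)

/-- Every attack on an unguarded vertex can be answered. -/
def IsSecure {V : Type*} (G : SimpleGraph V) (f : V → ℕ) : Prop :=
  ∀ v, f v = 0 → ∃ w, Protects G f w v

/-- The integers `i, j, k` are consecutive in increasing or in decreasing order. Allowing both
makes every statement below invariant under reversal of a chain of claws. -/
abbrev Consecutive (i j k : ℤ) : Prop :=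
  i + 1 = j ∧ j + 1 = k ∨ k + 1 = j ∧ j + 1 = i

/-- A covering of (part of) the graph `G` by a bi-infinite chain of claws: the `j`-th claw has
centre `hub j` and leaves `leaf j t`, and each leaf is joined to the leaves on the same track `t`
in the two neighbouring claws. Distant claws may coincide in `G`. -/
structure ClawChain {V : Type*} (G : SimpleGraph V) where
  hub : ℤ → V
  leaf : ℤ → Fin 3 → V
  adj_hub_iff {j : ℤ} {v : V} : G.Adj (hub j) v ↔ ∃ t, v = leaf j t
  adj_leaf_iff {j : ℤ} {t : Fin 3} {v : V} :
    G.Adj (leaf j t) v ↔ v = hub j ∨ v = leaf (j - 1) t ∨ v = leaf (j + 1) t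
  hub_ne_leaf (j k : ℤ) (t : Fin 3) : hub j ≠ leaf k t
  leaf_injective (j : ℤ) : Function.Injective (leaf j)
  leaf_ne_leaf_add_one (j : ℤ) (s t : Fin 3) : leaf j s ≠ leaf (j + 1) t

namespace ClawChain

variable {V : Type*} {G : SimpleGraph V} (C : ClawChain G) {f : V → ℕ} {h i j k l : ℤ}
  {s t : Fin 3} {v : V}

/-- The total weight of the three leaves of the `j`-th claw. -/
def leafWeight (f : V → ℕ) (j : ℤ) : ℕ := ∑ t, f (C.leaf j t)

/-- The total weight of the `j`-th claw. -/
def weight (f : V → ℕ) (j : ℤ) : ℕ := f (C.hub j) + C.leafWeight f j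

theorem le_leafWeight (f : V → ℕ) (j : ℤ) (t : Fin 3) : f (C.leaf j t) ≤ C.leafWeight f j :=
  Finset.single_le_sum (f := fun t => f (C.leaf j t)) (fun _ _ => Nat.zero_le _)
    (Finset.mem_univ t)

theorem add_le_leafWeight (f : V → ℕ) (j : ℤ) (hst : s ≠ t) :
    f (C.leaf j s) + f (C.leaf j t) ≤ C.leafWeight f j := by
  rw [← Finset.sum_pair (f := fun t => f (C.leaf j t)) hst]
  exact Finset.sum_le_sum_of_subset (Finset.subset_univ _)

theorem leafWeight_le_weight (f : V → ℕ) (j : ℤ) : C.leafWeight f j ≤ C.weight f j :=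
  Nat.le_add_left _ _

theorem adj_leaf_iff_of_consecutive (hijk : Consecutive i j k) :
    G.Adj (C.leaf j t) v ↔ v = C.hub j ∨ v = C.leaf i t ∨ v = C.leaf k t := by
  rw [C.adj_leaf_iff]
  rcases hijk with ⟨rfl, rfl⟩ | ⟨rfl, rfl⟩
  · rw [add_sub_cancel_right]
  · rw [add_sub_cancel_right, or_comm (a := v = C.leaf k t)]

theorem leaf_ne_leaf_of_consecutive (hijk : Consecutive i j k) (s t : Fin 3) :
    C.leaf i s ≠ C.leaf j t := by
  rcases hijk with ⟨rfl, -⟩ | ⟨-, rfl⟩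
  · exact C.leaf_ne_leaf_add_one i s t
  · exact (C.leaf_ne_leaf_add_one j t s).symm

theorem not_adj_leaf_leaf : ¬ G.Adj (C.leaf j s) (C.leaf j t) := by
  have hj : Consecutive (j - 1) j (j + 1) := by omega
  rw [C.adj_leaf_iff]
  rintro (h | h | h)
  · exact C.hub_ne_leaf _ _ _ h.symm
  · exact C.leaf_ne_leaf_of_consecutive hj _ _ h.symm
  · exact C.leaf_ne_leaf_add_one _ _ _ h

theorem eq_hub_of_protects_of_weight_eq_one (hj : C.weight f j = 1)
    (hp : Protects G f (C.leaf j t) v) : v = C.hub j := by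
  obtain ⟨-, hadj, hpos, hdef⟩ := hp
  by_contra hv
  have hnadj : ¬ G.Adj (C.hub j) v := by
    rw [C.adj_hub_iff]
    rintro ⟨s, rfl⟩
    exact C.not_adj_leaf_leaf hadj
  have hle := C.le_leafWeight f j t
  obtain ⟨x, rfl | hx, hfx, hfx'⟩ := hdef (C.hub j) (Ne.symm hv) hnadj
  · unfold weight at hj
    omega
  · obtain ⟨s, rfl⟩ := C.adj_hub_iff.1 hx
    unfold weight at hj
    by_cases hst : s = t
    · subst hst
      have := hfx' rfl
      omega
    · have := C.add_le_leafWeight f j hst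
      omega

theorem not_protects_leaf_leaf (hi : C.weight f i = 1) :
    ¬ Protects G f (C.leaf i s) (C.leaf j t) := fun hp =>
  C.hub_ne_leaf i j t (C.eq_hub_of_protects_of_weight_eq_one hi hp).symm

theorem protects_leaf_cases (hf : IsSecure G f) (hijk : Consecutive i j k)
    (ht : f (C.leaf j t) = 0) :
    Protects G f (C.hub j) (C.leaf j t) ∨ Protects G f (C.leaf i t) (C.leaf j t) ∨
      Protects G f (C.leaf k t) (C.leaf j t) := by
  obtain ⟨w, hw⟩ := hf _ ht
  rcases (C.adj_leaf_iff_of_consecutive hijk).1 hw.adj with rfl | rfl | rfl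
  exacts [.inl hw, .inr (.inl hw), .inr (.inr hw)]

theorem hub_protects_leaf_of_weight_eq_one (hf : IsSecure G f) (hijk : Consecutive i j k)
    (hi : C.weight f i = 1) (hk : C.weight f k = 1) (ht : f (C.leaf j t) = 0) :
    Protects G f (C.hub j) (C.leaf j t) := by
  rcases C.protects_leaf_cases hf hijk ht with h | h | h
  exacts [h, (C.not_protects_leaf_leaf hi h).elim, (C.not_protects_leaf_leaf hk h).elim]

theorem one_le_hub_of_weight_eq_one (hf : IsSecure G f) (hijk : Consecutive i j k)
    (hi : C.weight f i = 1) (hj : C.weight f j ≤ 2) (hk : C.weight f k = 1) :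
    1 ≤ f (C.hub j) := by
  by_contra hhub
  have hleaf : ∀ t, 1 ≤ f (C.leaf j t) := fun t => by
    by_contra ht
    exact hhub (C.hub_protects_leaf_of_weight_eq_one hf hijk hi hk (t := t) (by omega)).one_le
  have h0 := hleaf 0
  have h1 := hleaf 1
  have h2 := hleaf 2
  simp only [weight, leafWeight, Fin.sum_univ_three] at hj
  omega

theorem one_le_outer_of_hub_protects (hijk : Consecutive i j k) (hhub : f (C.hub j) ≤ 1)
    (hp : Protects G f (C.hub j) (C.leaf j s)) (ht : f (C.leaf j t) = 0) (hts : t ≠ s) :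
    1 ≤ f (C.leaf i t) + f (C.leaf k t) := by
  obtain ⟨x, rfl | hx, hfx, hfx'⟩ :=
    hp.exists_guard (C.leaf j t) ((C.leaf_injective j).ne hts) C.not_adj_leaf_leaf
  · omega
  · rcases (C.adj_leaf_iff_of_consecutive hijk).1 hx with rfl | rfl | rfl
    · have := hfx' rfl
      omega
    · omega
    · omega

theorem outer_covers_or_exists_outer_protects (hf : IsSecure G f) (hijk : Consecutive i j k)
    (hj : C.weight f j = 1) :
    (∀ t, 1 ≤ f (C.leaf i t) + f (C.leaf k t)) ∨
      ∃ s t, s ≠ t ∧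
        (Protects G f (C.leaf i s) (C.leaf j s) ∨ Protects G f (C.leaf k s) (C.leaf j s)) ∧
        (Protects G f (C.leaf i t) (C.leaf j t) ∨ Protects G f (C.leaf k t) (C.leaf j t)) := by
  let outer (t : Fin 3) : Prop :=
    Protects G f (C.leaf i t) (C.leaf j t) ∨ Protects G f (C.leaf k t) (C.leaf j t)
  obtain ⟨s, t, hst, heq⟩ := Fintype.exists_ne_map_eq_of_card_lt outer (by simp)
  by_cases hs : outer s
  · exact .inr ⟨s, t, hst, hs, heq.mp hs⟩
  have hub_of_zero {q : Fin 3} (hq : ¬ outer q) (hq₀ : f (C.leaf j q) = 0) :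
      Protects G f (C.hub j) (C.leaf j q) :=
    (C.protects_leaf_cases hf hijk hq₀).resolve_right hq
  have ht : ¬ outer t := heq ▸ hs
  have hle := C.add_le_leafWeight f j hst
  unfold weight at hj
  have hhub : f (C.hub j) = 1 := by
    by_cases hs₀ : f (C.leaf j s) = 0
    · have := (hub_of_zero hs hs₀).one_le
      omega
    · have := (hub_of_zero ht (by omega)).one_le
      omega
  have hleaf (r : Fin 3) : f (C.leaf j r) = 0 := by
    have := C.le_leafWeight f j r
    omega
  left
  intro r
  by_cases hrs : r = s
  · exact C.one_le_outer_of_hub_protects hijk hhub.le (hub_of_zero ht (hleaf t)) (hleaf r)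
      (hrs ▸ hst)
  · exact C.one_le_outer_of_hub_protects hijk hhub.le (hub_of_zero hs (hleaf s)) (hleaf r) hrs

theorem three_le_leafWeight_add_leafWeight
    (hcov : ∀ t, 1 ≤ f (C.leaf i t) + f (C.leaf k t)) :
    3 ≤ C.leafWeight f i + C.leafWeight f k := by
  rw [leafWeight, leafWeight, ← Finset.sum_add_distrib]
  simpa using Finset.card_nsmul_le_sum Finset.univ _ 1 fun t _ => hcov t

theorem two_le_leafWeight_of_weight_eq_one (hf : IsSecure G f) (hijk : Consecutive i j k)
    (hi : C.weight f i = 1) (hj : C.weight f j = 1) : 2 ≤ C.leafWeight f k := by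
  rcases C.outer_covers_or_exists_outer_protects hf hijk hj with hcov | ⟨s, t, hst, hs, ht⟩
  · have := C.three_le_leafWeight_add_leafWeight hcov
    unfold weight at hi
    omega
  · have hs' := hs.resolve_left (C.not_protects_leaf_leaf hi)
    have ht' := ht.resolve_left (C.not_protects_leaf_leaf hi)
    exact (add_le_add hs'.one_le ht'.one_le).trans (C.add_le_leafWeight f k hst)

theorem three_le_weight_of_weight_eq_one (hf : IsSecure G f) (hijk : Consecutive i j k)
    (hjkl : Consecutive j k l) (hi : C.weight f i = 1) (hj : C.weight f j = 1)
    (hl : C.weight f l = 1) :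
    3 ≤ C.weight f k := by
  by_contra hk
  have hhub := C.one_le_hub_of_weight_eq_one hf hjkl hj (by omega) hl
  have hleaf := C.two_le_leafWeight_of_weight_eq_one hf hijk hi hj
  unfold weight at hk
  omega

theorem exists_protects_from_both_sides (hf : IsSecure G f) (hijk : Consecutive i j k)
    (hi : C.leafWeight f i ≤ 1) (hj : C.weight f j = 1) (hk : C.leafWeight f k ≤ 1) :
    ∃ s t, s ≠ t ∧ Protects G f (C.leaf i s) (C.leaf j s) ∧
      Protects G f (C.leaf k t) (C.leaf j t) := by
  rcases C.outer_covers_or_exists_outer_protects hf hijk hj with hcov | ⟨s, t, hst, hs, ht⟩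
  · have := C.three_le_leafWeight_add_leafWeight hcov
    omega
  have hi' := C.add_le_leafWeight f i hst
  have hk' := C.add_le_leafWeight f k hst
  rcases hs with hs | hs <;> rcases ht with ht | ht
  · have := hs.one_le
    have := ht.one_le
    omega
  · exact ⟨s, t, hst, hs, ht⟩
  · exact ⟨t, s, hst.symm, ht, hs⟩
  · have := hs.one_le
    have := ht.one_le
    omega

theorem one_le_hub_of_leaf_protects (hijk : Consecutive i j k) (hjkl : Consecutive j k l)
    (hik : C.leaf k t ≠ C.leaf i t) (hil : C.leaf l t ≠ C.leaf i t)
    (hp : Protects G f (C.leaf j t) (C.leaf i t)) (hj : f (C.leaf j t) ≤ 1)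
    (hk : f (C.leaf k t) = 0) (hl : f (C.leaf l t) = 0) : 1 ≤ f (C.hub k) := by
  have hnadj : ¬ G.Adj (C.leaf k t) (C.leaf i t) := by
    rw [C.adj_leaf_iff_of_consecutive hjkl]
    rintro (h | h | h)
    exacts [C.hub_ne_leaf _ _ _ h.symm, C.leaf_ne_leaf_of_consecutive hijk _ _ h, hil h.symm]
  obtain ⟨x, rfl | hx, hfx, hfx'⟩ := hp.exists_guard _ hik hnadj
  · omega
  rcases (C.adj_leaf_iff_of_consecutive hjkl).1 hx with rfl | rfl | rfl
  · exact hfx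
  · have := hfx' rfl
    omega
  · omega

theorem exists_outer_leaf_of_weight_le_two (hf : IsSecure G f) (hijk : Consecutive i j k)
    (hi : C.weight f i = 1) (hk : C.weight f k = 1) (hj : C.weight f j ≤ 2)
    (hhub : 1 ≤ f (C.hub j)) (ht : 1 ≤ f (C.leaf j t)) :
    ∃ r, 1 ≤ f (C.leaf i r) + f (C.leaf k r) := by
  unfold weight at hj
  have hzero {r : Fin 3} (hrt : r ≠ t) : f (C.leaf j r) = 0 := by
    have := C.add_le_leafWeight f j hrt
    omega
  have hle := C.le_leafWeight f j t
  obtain ⟨s, hst⟩ := exists_ne t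
  obtain ⟨r, hrs, hrt⟩ := Fin.exists_ne_and_ne_of_two_lt s t (by norm_num)
  exact ⟨r, C.one_le_outer_of_hub_protects hijk (by omega)
    (C.hub_protects_leaf_of_weight_eq_one hf hijk hi hk (hzero hst)) (hzero hrt) hrs⟩

theorem not_alternating_of_one_le_hub (hf : IsSecure G f) (hhij : Consecutive h i j)
    (hijk : Consecutive i j k) (hjkl : Consecutive j k l)
    (hik : ∀ t, C.leaf i t ≠ C.leaf k t) (hil : ∀ t, C.leaf i t ≠ C.leaf l t)
    (hhk : ∀ t, C.leaf h t ≠ C.leaf k t)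
    (hh : C.leafWeight f h ≤ 1) (hi : C.weight f i = 1) (hj : C.weight f j ≤ 2)
    (hhub : 1 ≤ f (C.hub j)) (hk : C.weight f k = 1) (hl : C.leafWeight f l ≤ 1) : False := by
  have hj' : C.leafWeight f j ≤ 1 := by
    unfold weight at hj
    omega
  obtain ⟨s, t, hst, hs, ht⟩ := C.exists_protects_from_both_sides hf hhij hh hi hj'
  obtain ⟨t', u, htu, ht', hu⟩ := C.exists_protects_from_both_sides hf hjkl hj' hk hl
  obtain rfl : t' = t := by
    by_contra hne
    have := C.add_le_leafWeight f j hne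
    have := ht.one_le
    have := ht'.one_le
    omega
  have hjt := (C.le_leafWeight f j t').trans hj'
  have hhub_i : 1 ≤ f (C.hub i) := by
    have := C.add_le_leafWeight f h hst
    have := hs.one_le
    exact C.one_le_hub_of_leaf_protects (by omega) (by omega) (hik t') (hhk t') ht' hjt ht.eq_zero
      (by omega)
  have hhub_k : 1 ≤ f (C.hub k) := by
    have := C.add_le_leafWeight f l htu
    have := hu.one_le
    exact C.one_le_hub_of_leaf_protects hijk hjkl (hik t').symm (hil t').symm ht hjt ht'.eq_zero
      (by omega)
  obtain ⟨r, hr⟩ := C.exists_outer_leaf_of_weight_le_two hf hijk hi hk hj hhub ht.one_le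
  have := C.le_leafWeight f i r
  have := C.le_leafWeight f k r
  unfold weight at hi hk
  omega

theorem not_weight_1212121 (hf : IsSecure G f)
    (h_two : ∀ j t, C.leaf j t ≠ C.leaf (j + 2) t)
    (h_three : ∀ j t, C.leaf j t ≠ C.leaf (j + 3) t)
    (h₀ : C.weight f j = 1) (h₁ : C.weight f (j + 1) = 2) (h₂ : C.weight f (j + 2) = 1)
    (h₃ : C.weight f (j + 3) = 2) (h₄ : C.weight f (j + 4) = 1) (h₅ : C.weight f (j + 5) = 2)
    (h₆ : C.weight f (j + 6) = 1) : False := by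
  have hub₁ := C.one_le_hub_of_weight_eq_one hf (by omega) h₀ h₁.le h₂
  have hub₃ := C.one_le_hub_of_weight_eq_one hf (by omega) h₂ h₃.le h₄
  have hub₅ := C.one_le_hub_of_weight_eq_one hf (by omega) h₄ h₅.le h₆
  refine C.not_alternating_of_one_le_hub (h := j + 1) (l := j + 5) hf (by omega) (by omega)
    (by omega) (fun t => ?_) (fun t => ?_) (fun t => ?_) ?_ h₂ h₃.le hub₃ h₄ ?_
  · simpa only [add_assoc, Int.reduceAdd] using h_two (j + 2) t
  · simpa only [add_assoc, Int.reduceAdd] using h_three (j + 2) t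
  · simpa only [add_assoc, Int.reduceAdd] using h_three (j + 1) t
  · unfold weight at h₁
    omega
  · unfold weight at h₅
    omega

end ClawChain

theorem semiconj_perm_zpow {α β : Type*} {π : α → β} {σ : Equiv.Perm α} {τ : Equiv.Perm β}
    (h : Function.Semiconj π σ τ) (j : ℤ) : Function.Semiconj π ⇑(σ ^ j) ⇑(τ ^ j) := by
  obtain m | m := j
  · simpa only [Int.ofNat_eq_natCast, zpow_natCast, ← Equiv.Perm.iterate_eq_pow]
      using h.iterate_right m
  · rw [zpow_negSucc, zpow_negSucc, ← inv_pow, ← inv_pow, ← Equiv.Perm.iterate_eq_pow,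
      ← Equiv.Perm.iterate_eq_pow]
    exact (h.inverses_right σ.right_inv τ.left_inv).iterate_right (m + 1)

section FlowerSnark

variable {n : ℕ} [NeZero n]

/-- The automorphism of `J_n` that moves every copy to the next one, with the twist between
the last copy and the first. -/
def twistedShift (n : ℕ) [NeZero n] : Equiv.Perm (FV n) :=
  Equiv.prodShear (Equiv.addRight 1) fun i =>
    if (i : ℕ) + 1 = n then Equiv.swap 2 3 else Equiv.refl _

theorem twistedShift_zpow_apply_fst (j : ℤ) (v : FV n) :
    ((twistedShift n ^ j) v).1 = v.1 + j • (1 : Fin n) := by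
  have hsemi : Function.Semiconj Prod.fst (twistedShift n) (Equiv.addRight (1 : Fin n)) :=
    fun _ => rfl
  rw [semiconj_perm_zpow hsemi j v, Equiv.zsmul_addRight, Equiv.coe_addRight]

theorem twistedShift_zpow_apply_snd_eq_zero_iff (j : ℤ) (v : FV n) :
    ((twistedShift n ^ j) v).2 = 0 ↔ v.2 = 0 := by
  have hsemi : Function.Semiconj (fun v : FV n => v.2 = 0) (twistedShift n)
      (1 : Equiv.Perm Prop) := by
    rintro ⟨i, x⟩
    simp only [twistedShift, Equiv.prodShear_apply, Equiv.Perm.coe_one, id_eq]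
    split_ifs
    · decide +revert
    · rfl
  simpa using semiconj_perm_zpow hsemi j v

theorem twistedShift_apply_snd_eq_zero_iff (v : FV n) : (twistedShift n v).2 = 0 ↔ v.2 = 0 := by
  simpa using twistedShift_zpow_apply_snd_eq_zero_iff 1 v

theorem twistedShift_zpow_apply_hub (j : ℤ) :
    (twistedShift n ^ j) (0, 0) = (j • (1 : Fin n), 0) :=
  Prod.ext ((twistedShift_zpow_apply_fst j _).trans (zero_add _))
    ((twistedShift_zpow_apply_snd_eq_zero_iff j _).2 rfl)

open scoped Fin.CommRing in
theorem zsmul_one_ne_zero_of_lt {d : ℤ} (hd : 0 < d) (hdn : d < n) : d • (1 : Fin n) ≠ 0 := by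
  lift d to ℕ using hd.le
  rw [natCast_zsmul, nsmul_one, ne_eq, Fin.natCast_eq_zero]
  exact Nat.not_dvd_of_pos_of_lt (by omega) (by omega)

theorem twistedShift_zpow_apply_ne {d : ℤ} (hd : 0 < d) (hdn : d < n) (j : ℤ) (x y : Fin 4) :
    (twistedShift n ^ j) (0, x) ≠ (twistedShift n ^ (j + d)) (0, y) := by
  refine ne_of_apply_ne Prod.fst ?_
  rw [twistedShift_zpow_apply_fst, twistedShift_zpow_apply_fst, add_zsmul]
  simpa using zsmul_one_ne_zero_of_lt hd hdn

theorem eq_twistedShift_iff {v w : FV n} (hv : v.2 ≠ 0) :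
    w = twistedShift n v ↔
      ((v.1 : ℕ) + 1) % n = w.1 ∧ v.2 = 1 ∧ w.2 = 1 ∨
      (v.1 : ℕ) + 1 = w.1 ∧ v.2 = 2 ∧ w.2 = 2 ∨
      (v.1 : ℕ) + 1 = w.1 ∧ v.2 = 3 ∧ w.2 = 3 ∨
      (v.1 : ℕ) = n - 1 ∧ (w.1 : ℕ) = 0 ∧ v.2 = 2 ∧ w.2 = 3 ∨
      (v.1 : ℕ) = n - 1 ∧ (w.1 : ℕ) = 0 ∧ v.2 = 3 ∧ w.2 = 2 := by
  obtain ⟨i, x⟩ := v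
  obtain ⟨k, y⟩ := w
  have hik : k = i + 1 ↔ ((i : ℕ) + 1) % n = k := by
    rw [eq_comm, Fin.ext_iff, Fin.val_add, Fin.val_one', Nat.add_mod_mod]
  have hid : ∀ x y : Fin 4, x ≠ 0 →
      (y = x ↔ x = 1 ∧ y = 1 ∨ x = 2 ∧ y = 2 ∨ x = 3 ∧ y = 3) := by decide
  have hswap : ∀ x y : Fin 4, x ≠ 0 →
      (y = Equiv.swap 2 3 x ↔ x = 1 ∧ y = 1 ∨ x = 2 ∧ y = 3 ∨ x = 3 ∧ y = 2) := by decide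
  simp only [twistedShift, Equiv.prodShear_apply, Equiv.coe_addRight, Prod.mk.injEq, hik]
  by_cases hi : (i : ℕ) + 1 = n
  · have hmod : ((i : ℕ) + 1) % n = 0 := by rw [hi, Nat.mod_self]
    rw [if_pos hi, hswap x y hv, hmod]
    omega
  · have hmod : ((i : ℕ) + 1) % n = i + 1 := Nat.mod_eq_of_lt (by omega)
    rw [if_neg hi, Equiv.refl_apply, hid x y hv, hmod]
    omega

theorem twistedShift_apply_ne (hn : 2 ≤ n) (v : FV n) : twistedShift n v ≠ v := by
  refine ne_of_apply_ne Prod.fst ?_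
  have h1 := zsmul_one_ne_zero_of_lt (n := n) one_pos (by omega)
  rw [one_zsmul] at h1
  exact add_ne_left.2 h1

theorem flowerSnark_adj_zero_iff {n : ℕ} {i : Fin n} {v : FV n} :
    (flowerSnark n).Adj (i, 0) v ↔ v.1 = i ∧ v.2 ≠ 0 := by
  have hne (h : v.2 ≠ 0) : (i, 0) ≠ v := fun hv => h (by rw [← hv])
  simp only [flowerSnark, SimpleGraph.fromRel_adj]
  grind

theorem flowerSnark_adj_iff_of_ne_zero (hn : 2 ≤ n) {v w : FV n} (hv : v.2 ≠ 0) (hw : w.2 ≠ 0) :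
    (flowerSnark n).Adj v w ↔ v = twistedShift n w ∨ w = twistedShift n v := by
  have hne : v = twistedShift n w ∨ w = twistedShift n v → v ≠ w := by
    rintro h rfl
    exact twistedShift_apply_ne hn v (or_self_iff.1 h).symm
  rw [← and_iff_right_of_imp hne, eq_twistedShift_iff hv, eq_twistedShift_iff hw, flowerSnark,
    SimpleGraph.fromRel_adj, or_comm]
  simp only [hv, hw, false_and, and_false, false_or]

theorem flowerSnark_adj_iff_s18 (hn : 2 ≤ n) {v w : FV n} (hv : v.2 ≠ 0) :
    (flowerSnark n).Adj v w ↔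
      w = (v.1, 0) ∨ w = (twistedShift n).symm v ∨ w = twistedShift n v := by
  have hsnd := twistedShift_apply_snd_eq_zero_iff (n := n)
  rw [Equiv.eq_symm_apply, eq_comm (b := v)]
  by_cases hw : w.2 = 0
  · have hvw : v ≠ twistedShift n w := fun h => hv (by rw [h, hsnd, hw])
    have hwv : w ≠ twistedShift n v := fun h => hv (by rw [← hsnd, ← h, hw])
    obtain ⟨k, y⟩ := w
    obtain rfl : y = 0 := hw
    simp [(flowerSnark n).adj_comm v, flowerSnark_adj_zero_iff, hv, hvw, hwv, eq_comm]
  · have hhub : w ≠ (v.1, 0) := fun h => hw (by rw [h])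
    rw [flowerSnark_adj_iff_of_ne_zero hn hv hw, or_iff_right hhub]

/-- The flower snark as a chain of claws. The infinite chain winds around `J_n`; its three tracks
are followed with the twist, so that a track may change its name between `c` and `d`. -/
def flowerSnarkChain (hn : 2 ≤ n) : ClawChain (flowerSnark n) where
  hub j := (twistedShift n ^ j) (0, 0)
  leaf j t := (twistedShift n ^ j) (0, t.succ)
  adj_hub_iff {j v} := by
    obtain ⟨⟨i, x⟩, rfl⟩ := (twistedShift n ^ j).surjective v
    rw [twistedShift_zpow_apply_hub, flowerSnark_adj_zero_iff, twistedShift_zpow_apply_fst, ne_eq,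
      twistedShift_zpow_apply_snd_eq_zero_iff, add_eq_right]
    simp only [EmbeddingLike.apply_eq_iff_eq, Prod.mk.injEq, exists_and_left,
      ← Fin.exists_succ_eq, eq_comm]
  adj_leaf_iff {j t v} := by
    rw [flowerSnark_adj_iff_s18 hn ((twistedShift_zpow_apply_snd_eq_zero_iff j _).not.2
      t.succ_ne_zero), twistedShift_zpow_apply_fst, zero_add, twistedShift_zpow_apply_hub,
      sub_eq_neg_add, add_comm j 1, zpow_add, zpow_add, zpow_neg_one, zpow_one]
    rfl
  hub_ne_leaf j k t := by
    refine ne_of_apply_ne (fun v => v.2 = 0) ?_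
    simp [twistedShift_zpow_apply_snd_eq_zero_iff]
  leaf_injective j s t h := by
    simpa using h
  leaf_ne_leaf_add_one j s t := twistedShift_zpow_apply_ne one_pos (by omega) j _ _

open scoped Fin.CommRing in
theorem weight_flowerSnarkChain (hn : 2 ≤ n) (f : FV n → ℕ) (m : ℕ) :
    (flowerSnarkChain hn).weight f m = fCopyWeight f m := by
  have hfst (v : FV n) : (((twistedShift n ^ (m : ℤ)) v).1 : ℕ) = m % n ↔ 0 = v.1 := by
    rw [twistedShift_zpow_apply_fst, natCast_zsmul, nsmul_one, ← Fin.val_natCast, ← Fin.ext_iff,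
      add_eq_right, eq_comm]
  rw [fCopyWeight, Finset.sum_filter, ← Equiv.sum_comp (twistedShift n ^ (m : ℤ)),
    Fintype.sum_prod_type]
  simp only [hfst]
  rw [Finset.sum_comm]
  simp only [Finset.sum_ite_eq, Finset.mem_univ, if_true]
  rw [Fin.sum_univ_succ]
  rfl

theorem WeakRomanDominating.isSecure {n : ℕ} {f : FV n → ℕ} (hf : WeakRomanDominating n f) :
    IsSecure (flowerSnark n) f := by
  intro v hv
  obtain ⟨w, hvw, hw, hdef⟩ := hf.2.2 v hv
  refine ⟨w, hv, hvw, hw, fun u huv hadj => ?_⟩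
  obtain ⟨x, hx, hfx⟩ : ∃ x, (x = u ∨ (flowerSnark n).Adj u x) ∧
      (if x = v then 1 else if x = w then f w - 1 else f x) ≠ 0 := by
    by_contra! h
    exact hdef u ⟨h u (.inl rfl), fun x hx => h x (.inr hx)⟩
  have hxv : x ≠ v := by
    rintro rfl
    exact hx.elim (fun h => huv h.symm) hadj
  rw [if_neg hxv] at hfx
  refine ⟨x, hx, ?_⟩
  split_ifs at hfx with hxw
  · subst hxw
    omega
  · exact ⟨Nat.one_le_iff_ne_zero.2 hfx, fun h => (hxw h).elim⟩

theorem ne_three_of_fCopyWeight_ne {n m : ℕ} {f : FV n → ℕ}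
    (h : fCopyWeight f m ≠ fCopyWeight f (m + 3)) : n ≠ 3 := by
  rintro rfl
  exact h (by rw [fCopyWeight, fCopyWeight, Nat.add_mod_right])

end FlowerSnark

/-- If `n ≥ 3` and `f` is a weak Roman dominating function on the flower snark
`J_n`, then `f` contains none of the patterns 111, 1121 (equivalently 1211 read
in reverse), or 1212121 of copy weights on consecutive copies
(indices mod `n`). -/
theorem flowerSnark_weakRoman_patterns (n : ℕ) (hn : 3 ≤ n)
    (f : FV n → ℕ) (hf : WeakRomanDominating n f) :
    (¬ ∃ i : Fin n, fCopyWeight f (i : ℕ) = 1 ∧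
        fCopyWeight f ((i : ℕ) + 1) = 1 ∧ fCopyWeight f ((i : ℕ) + 2) = 1) ∧
    (¬ ∃ i : Fin n, fCopyWeight f (i : ℕ) = 1 ∧
        fCopyWeight f ((i : ℕ) + 1) = 1 ∧ fCopyWeight f ((i : ℕ) + 2) = 2 ∧
        fCopyWeight f ((i : ℕ) + 3) = 1) ∧
    (¬ ∃ i : Fin n, fCopyWeight f (i : ℕ) = 1 ∧
        fCopyWeight f ((i : ℕ) + 1) = 2 ∧ fCopyWeight f ((i : ℕ) + 2) = 1 ∧
        fCopyWeight f ((i : ℕ) + 3) = 1) ∧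
    (¬ ∃ i : Fin n, fCopyWeight f (i : ℕ) = 1 ∧
        fCopyWeight f ((i : ℕ) + 1) = 2 ∧ fCopyWeight f ((i : ℕ) + 2) = 1 ∧
        fCopyWeight f ((i : ℕ) + 3) = 2 ∧ fCopyWeight f ((i : ℕ) + 4) = 1 ∧
        fCopyWeight f ((i : ℕ) + 5) = 2 ∧ fCopyWeight f ((i : ℕ) + 6) = 1) := by
  have : NeZero n := ⟨by omega⟩
  have hsec := hf.isSecure
  let C := flowerSnarkChain (n := n) (by omega)
  have hC (m : ℕ) : fCopyWeight f m = C.weight f m := (weight_flowerSnarkChain _ f m).symm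
  have hne {d : ℤ} (hd : 0 < d) (hdn : d < n) (j : ℤ) (t : Fin 3) : C.leaf j t ≠ C.leaf (j + d) t :=
    twistedShift_zpow_apply_ne hd hdn j _ _
  refine ⟨?_, ?_, ?_, ?_⟩
  · rintro ⟨i, h₀, h₁, h₂⟩
    simp only [hC, Nat.cast_add, Nat.cast_one, Nat.cast_ofNat] at h₀ h₁ h₂
    have := C.two_le_leafWeight_of_weight_eq_one (k := i + 2) hsec (by omega) h₀ h₁
    have := C.leafWeight_le_weight f (i + 2)
    omega
  · rintro ⟨i, h₀, h₁, h₂, h₃⟩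
    simp only [hC, Nat.cast_add, Nat.cast_one, Nat.cast_ofNat] at h₀ h₁ h₂ h₃
    have := C.three_le_weight_of_weight_eq_one (k := i + 2) hsec (by omega) (by omega) h₀ h₁ h₃
    omega
  · rintro ⟨i, h₀, h₁, h₂, h₃⟩
    simp only [hC, Nat.cast_add, Nat.cast_one, Nat.cast_ofNat] at h₀ h₁ h₂ h₃
    have := C.three_le_weight_of_weight_eq_one (k := i + 1) hsec (by omega) (by omega) h₃ h₂ h₀
    omega
  · rintro ⟨i, h₀, h₁, h₂, h₃, h₄, h₅, h₆⟩
    have hn3 : n ≠ 3 := ne_three_of_fCopyWeight_ne (m := i) (f := f) (by omega)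
    simp only [hC, Nat.cast_add, Nat.cast_one, Nat.cast_ofNat] at h₀ h₁ h₂ h₃ h₄ h₅ h₆
    exact C.not_weight_1212121 hsec (hne two_pos (by omega)) (hne three_pos (by omega))
      h₀ h₁ h₂ h₃ h₄ h₅ h₆
end
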